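/- arXiv:1311.3725 — 2 statements merged into one kernel-verified Lean document; each statement's English description precedes it below -/
import Mathlib

section
/- Let S : ℝ² → ℝ be real analytic and set P := ∂_x∂_y(∂_x−∂_y)S. Assume P is not identically zero near the origin, and let n ∈ ℕ be the order of vanishing of P at the origin, i.e. all partial derivatives of P of total order < n vanish at (0,0) while some partial derivative of total order n does not vanish at (0,0). Then there exists ε > 0 such that for every smooth function a : ℝ² → ℂ supported in {(x,y) : |x| < ε, |y| < ε} there is a constant C such that for every real λ with |λ| ≥ 1 and all f₁, f₂, f₃ ∈ L²(ℝ): |Λ_S(f₁,f₂,f₃)| ≤ C |λ|^{−1/(2(n+3))} ‖f₁‖_{L²} ‖f₂‖_{L²} ‖f₃‖_{L²}. -/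
open MeasureTheory

noncomputable section

/-- Partial derivative in the first variable. -/
def pdx (f : ℝ × ℝ → ℝ) : ℝ × ℝ → ℝ := fun p => deriv (fun t => f (t, p.2)) p.1

/-- Partial derivative in the second variable. -/
def pdy (f : ℝ × ℝ → ℝ) : ℝ × ℝ → ℝ := fun p => deriv (fun t => f (p.1, t)) p.2

/-- The differential operator `DS = ∂ₓ∂_y(∂ₓ − ∂_y)S = S_xxy − S_xyy`. -/
def DOp (S : ℝ × ℝ → ℝ) : ℝ × ℝ → ℝ := pdx (pdy (fun p => pdx S p - pdy S p))


structure Nice {E : Type*} [NormedAddCommGroup E] [MeasurableSpace E] (f : E → ℂ) : Prop where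
  meas : Measurable f
  bdd : ∃ M : ℝ, 0 ≤ M ∧ ∀ x, ‖f x‖ ≤ M
  supp : ∃ R : ℝ, 0 ≤ R ∧ ∀ x, R < ‖x‖ → f x = 0

section nice
variable {E F G : Type*} [NormedAddCommGroup E] [MeasurableSpace E]
  [NormedAddCommGroup F] [MeasurableSpace F] [NormedAddCommGroup G] [MeasurableSpace G]

theorem Nice.integrable [ProperSpace E] [BorelSpace E] {μ : Measure E}
    [IsFiniteMeasureOnCompacts μ] {f : E → ℂ} (hf : Nice f) : Integrable f μ := by
  obtain ⟨M, hM0, hM⟩ := hf.bdd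
  obtain ⟨R, hR0, hR⟩ := hf.supp
  have h1 : IntegrableOn f (Metric.closedBall 0 R) μ := by
    refine Measure.integrableOn_of_bounded (M := M) (isCompact_closedBall 0 R).measure_lt_top.ne
      hf.meas.aestronglyMeasurable ?_
    exact Filter.Eventually.of_forall hM
  refine (integrableOn_iff_integrable_of_support_subset ?_).1 h1
  intro x hx
  by_contra h
  apply hx
  apply hR
  simpa using h

theorem Nice.mul_bdd {f g : E → ℂ} (hf : Nice f) (hg : Measurable g) (K : ℝ)
    (hK : ∀ x, ‖g x‖ ≤ K) : Nice (fun x => f x * g x) := by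
  obtain ⟨M, hM0, hM⟩ := hf.bdd
  obtain ⟨R, hR0, hR⟩ := hf.supp
  have hK0 : 0 ≤ K := (norm_nonneg _).trans (hK 0)
  refine ⟨hf.meas.mul hg, ⟨M * K, by positivity, fun x => ?_⟩, ⟨R, hR0, fun x hx => by simp [hR x hx]⟩⟩
  rw [norm_mul]
  exact mul_le_mul (hM x) (hK x) (norm_nonneg _) hM0

theorem Nice.mul {f g : E → ℂ} (hf : Nice f) (hg : Nice g) : Nice (fun x => f x * g x) := by
  obtain ⟨M, hM0, hM⟩ := hg.bdd
  exact hf.mul_bdd hg.meas M hM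

theorem Nice.conj {f : E → ℂ} (hf : Nice f) : Nice (fun x => (starRingEnd ℂ) (f x)) := by
  obtain ⟨M, hM0, hM⟩ := hf.bdd
  obtain ⟨R, hR0, hR⟩ := hf.supp
  refine ⟨Complex.continuous_conj.measurable.comp hf.meas, ⟨M, hM0, fun x => ?_⟩, ⟨R, hR0, fun x hx => by simp [hR x hx]⟩⟩
  simpa using hM x

theorem Nice.comp {f : E → ℂ} (hf : Nice f) {g : F → E} (hg : Measurable g) (A B : ℝ)
    (hA : 0 ≤ A) (hB : 0 ≤ B) (h : ∀ x, ‖x‖ ≤ A * ‖g x‖ + B) : Nice (fun x => f (g x)) := by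
  obtain ⟨M, hM0, hM⟩ := hf.bdd
  obtain ⟨R, hR0, hR⟩ := hf.supp
  refine ⟨hf.meas.comp hg, ⟨M, hM0, fun x => hM _⟩, ⟨A * R + B, by positivity, fun x hx => ?_⟩⟩
  apply hR
  by_contra h'
  have := h x
  have := mul_le_mul_of_nonneg_left (not_lt.1 h') hA
  linarith

theorem Nice.comp_mul {f : E → ℂ} (hf : Nice f) {f' : F → ℂ} (hf' : Nice f')
    {g : G → E} (hg : Measurable g) {g' : G → F} (hg' : Measurable g') (A : ℝ)
    (hA : 0 ≤ A) (h : ∀ x, ‖x‖ ≤ A * (‖g x‖ + ‖g' x‖)) : Nice (fun x => f (g x) * f' (g' x)) := by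
  obtain ⟨M, hM0, hM⟩ := hf.bdd
  obtain ⟨R, hR0, hR⟩ := hf.supp
  obtain ⟨M', hM0', hM'⟩ := hf'.bdd
  obtain ⟨R', hR0', hR'⟩ := hf'.supp
  refine ⟨(hf.meas.comp hg).mul (hf'.meas.comp hg'), ⟨M * M', by positivity, fun x => ?_⟩,
    ⟨A * (R + R'), by positivity, fun x hx => ?_⟩⟩
  · rw [norm_mul]
    exact mul_le_mul (hM _) (hM' _) (norm_nonneg _) hM0
  · by_cases h1 : R < ‖g x‖
    · simp [hR _ h1]
    by_cases h2 : R' < ‖g' x‖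
    · simp [hR' _ h2]
    exfalso
    have := h x
    have := mul_le_mul_of_nonneg_left (add_le_add (not_lt.1 h1) (not_lt.1 h2)) hA
    linarith

theorem Nice.integrable_sq [ProperSpace E] [BorelSpace E] {μ : Measure E}
    [IsFiniteMeasureOnCompacts μ] {f : E → ℂ} (hf : Nice f) :
    Integrable (fun x => ‖f x‖ ^ 2) μ := by
  have := (hf.mul hf).integrable (μ := μ) |>.norm
  simpa [sq] using this

end nice

theorem Nice.slice1 {v : ℝ × ℝ → ℂ} (hv : Nice v) (t : ℝ) : Nice (fun x => v (x, t)) :=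
  hv.comp (by fun_prop) 1 0 (by norm_num) le_rfl (fun x => by
    simp only [one_mul, add_zero]; exact norm_fst_le (x, t))

theorem Nice.slice2 {v : ℝ × ℝ → ℂ} (hv : Nice v) (t : ℝ) : Nice (fun x => v (t, x)) :=
  hv.comp (by fun_prop) 1 0 (by norm_num) le_rfl (fun x => by
    simp only [one_mul, add_zero]; exact norm_snd_le (t, x))

theorem Nice.int1 {v : ℝ × ℝ → ℂ} (hv : Nice v) : Nice (fun t => ∫ x, v (x, t)) := by
  obtain ⟨M, hM0, hM⟩ := hv.bdd
  obtain ⟨R, hR0, hR⟩ := hv.supp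
  refine ⟨?_, ⟨M * (2 * R), by positivity, fun t => ?_⟩, ⟨R, hR0, fun t ht => ?_⟩⟩
  · exact (hv.meas.stronglyMeasurable.integral_prod_left' (μ := volume)).measurable
  · have h1 : ∫ x, v (x, t) = ∫ x in Set.Icc (-R) R, v (x, t) := by
      symm
      apply setIntegral_eq_integral_of_forall_compl_eq_zero
      intro x hx
      apply hR
      refine lt_of_lt_of_le ?_ (norm_fst_le (x, t))
      by_contra h
      apply hx
      simpa [abs_le] using h
    rw [h1]
    have := norm_setIntegral_le_of_norm_le_const (μ := volume) (s := Set.Icc (-R) R) (C := M)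
      (f := fun x => v (x, t)) (by simp) (fun x _ => hM _)
    refine this.trans (le_of_eq ?_)
    simp [Measure.real, hR0]
    left; ring
  · have : ∀ x, v (x, t) = 0 := fun x => hR _ (lt_of_lt_of_le ht (norm_snd_le (x, t)))
    simp [this]

theorem cs0 {a b : ℝ → ℝ} (ha : Integrable (fun x => a x ^ 2)) (hb : Integrable (fun x => b x ^ 2))
    (hab : Integrable (fun x => a x * b x)) :
    (∫ x, a x * b x) ^ 2 ≤ (∫ x, a x ^ 2) * ∫ x, b x ^ 2 := by
  have key : ∀ t : ℝ, 0 ≤ (∫ x, b x ^ 2) * (t * t) + (2 * ∫ x, a x * b x) * t + ∫ x, a x ^ 2 := by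
    intro t
    have h : 0 ≤ ∫ x, (a x + t * b x) ^ 2 := integral_nonneg (fun x => sq_nonneg _)
    have e : (fun x => (a x + t * b x) ^ 2) = fun x => a x ^ 2 + ((2 * t) * (a x * b x) + t ^ 2 * b x ^ 2) := by
      funext x; ring
    have i1 : Integrable (fun x => (2 * t) * (a x * b x) + t ^ 2 * b x ^ 2) :=
      (hab.const_mul _).add (hb.const_mul _)
    rw [e, integral_add ha i1, integral_add (hab.const_mul _) (hb.const_mul _), integral_const_mul, integral_const_mul] at h
    linarith
  have := discrim_le_zero key
  unfold discrim at this
  nlinarith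

theorem cs1 {v : ℝ × ℝ → ℂ} {g : ℝ → ℂ} (hv : Nice v) (hg : Nice g) :
    ‖∫ p : ℝ × ℝ, v p * g p.2‖ ^ 2 ≤ (∫ t, ‖g t‖ ^ 2) *
      ‖∫ q : ℝ × ℝ, ∫ t, v (q.1, t) * (starRingEnd ℂ) (v (q.2, t))‖ := by
  have hn : Nice (fun p : ℝ × ℝ => v p * g p.2) := by
    obtain ⟨M, _, hM⟩ := hg.bdd
    exact hv.mul_bdd (hg.meas.comp measurable_snd) M (fun x => hM _)
  set h : ℝ → ℂ := fun t => ∫ x, v (x, t) with hh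
  have hhN : Nice h := hv.int1
  have e1 : ∫ p : ℝ × ℝ, v p * g p.2 = ∫ t, h t * g t := by
    have := integral_prod_symm (μ := (volume : Measure ℝ)) (ν := (volume : Measure ℝ)) _ hn.integrable
    rw [← Measure.volume_eq_prod] at this
    rw [this]
    congr 1; funext t
    simp only [hh]
    rw [integral_mul_const]
  have e2 : ((∫ t, ‖h t‖ ^ 2 : ℝ) : ℂ) = ∫ q : ℝ × ℝ, ∫ t, v (q.1, t) * (starRingEnd ℂ) (v (q.2, t)) := by
    rw [← integral_complex_ofReal]
    rw [integral_integral_swap]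
    · congr 1; funext t
      have : ((‖h t‖ ^ 2 : ℝ) : ℂ) = h t * (starRingEnd ℂ) (h t) := by
        rw [Complex.mul_conj, Complex.normSq_eq_norm_sq]
      rw [this, Measure.volume_eq_prod]
      rw [integral_prod_mul (fun x => v (x, t)) (fun x => (starRingEnd ℂ) (v (x, t))), integral_conj]
    · apply Nice.integrable
      refine hv.comp_mul hv.conj (g := fun z : (ℝ × ℝ) × ℝ => (z.1.1, z.2))
        (g' := fun z : (ℝ × ℝ) × ℝ => (z.1.2, z.2)) (by fun_prop) (by fun_prop) 1 (by norm_num) ?_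
      rintro ⟨⟨x, y⟩, t⟩
      simp only [Prod.norm_def, one_mul]
      have a1 := norm_nonneg x
      have a2 := norm_nonneg y
      have a3 := norm_nonneg t
      refine max_le (max_le ?_ ?_) ?_ <;>
      linarith [le_max_left ‖x‖ ‖t‖, le_max_right ‖x‖ ‖t‖, le_max_left ‖y‖ ‖t‖, le_max_right ‖y‖ ‖t‖]
  have e3 : ‖∫ q : ℝ × ℝ, ∫ t, v (q.1, t) * (starRingEnd ℂ) (v (q.2, t))‖ = ∫ t, ‖h t‖ ^ 2 := by
    rw [← e2, Complex.norm_real]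
    exact abs_of_nonneg (integral_nonneg (fun x => sq_nonneg _))
  rw [e3, e1]
  have i3 : Integrable (fun t => ‖h t‖ * ‖g t‖) := by
    simpa using (hhN.mul hg).integrable (μ := volume) |>.norm
  have := cs0 (a := fun t => ‖h t‖) (b := fun t => ‖g t‖) hhN.integrable_sq hg.integrable_sq i3
  have h4 : ‖∫ t, h t * g t‖ ≤ ∫ t, ‖h t‖ * ‖g t‖ := by
    refine (norm_integral_le_integral_norm _).trans (le_of_eq ?_)
    simp
  calc _ ≤ (∫ t, ‖h t‖ * ‖g t‖) ^ 2 := by gcongr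
    _ ≤ _ := this
    _ = _ := mul_comm _ _

theorem shear_int {E : Type*} [NormedAddCommGroup E] [NormedSpace ℝ E] (h : ℝ × ℝ → E) :
    ∫ p : ℝ × ℝ, h (p.1, p.1 + p.2) = ∫ p, h p := by
  have hm : MeasurePreserving (MeasurableEquiv.shearAddRight ℝ) (volume : Measure (ℝ × ℝ)) volume :=
    measurePreserving_prod_add volume volume
  exact hm.integral_comp' (g := h)

theorem shear_integrable {E : Type*} [NormedAddCommGroup E] [NormedSpace ℝ E] {h : ℝ × ℝ → E}
    (hh : Integrable h) : Integrable (fun p : ℝ × ℝ => h (p.1, p.1 + p.2)) := by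
  have hm : MeasurePreserving (fun z : ℝ × ℝ => (z.1, z.1 + z.2)) (volume : Measure (ℝ × ℝ)) volume :=
    measurePreserving_prod_add volume volume
  exact hm.integrable_comp_of_integrable hh

theorem cs2 {u : ℝ × ℝ → ℂ} {g : ℝ → ℂ} (hu : Nice u) (hg : Nice g) :
    ‖∫ p : ℝ × ℝ, u p * g (p.1 + p.2)‖ ^ 2 ≤ (∫ t, ‖g t‖ ^ 2) *
      ∫ τ : ℝ, ‖∫ p : ℝ × ℝ, u p * (starRingEnd ℂ) (u (p.1 + τ, p.2 - τ))‖ := by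
  set v : ℝ × ℝ → ℂ := fun p => u (p.1, p.2 - p.1) with hv
  have hvN : Nice v := by
    refine hu.comp (by fun_prop) 2 0 (by norm_num) le_rfl ?_
    rintro ⟨x, t⟩
    simp only [Prod.norm_def, add_zero]
    have : ‖t‖ ≤ ‖t - x‖ + ‖x‖ := by simpa using norm_add_le (t - x) x
    have := le_max_left ‖x‖ ‖t - x‖
    have := le_max_right ‖x‖ ‖t - x‖
    have := norm_nonneg x
    refine max_le ?_ ?_ <;> linarith
  have e1 : ∫ p : ℝ × ℝ, u p * g (p.1 + p.2) = ∫ p, v p * g p.2 := by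
    rw [← shear_int (fun p => v p * g p.2)]
    simp [hv]
  have h1 := cs1 hvN hg
  rw [← e1] at h1
  refine h1.trans ?_
  gcongr
  have e2 : ∫ q : ℝ × ℝ, ∫ t, v (q.1, t) * (starRingEnd ℂ) (v (q.2, t)) =
      ∫ q : ℝ × ℝ, ∫ y, u (q.1, y) * (starRingEnd ℂ) (u (q.1 + q.2, y - q.2)) := by
    rw [← shear_int]
    congr 1; funext q
    rw [← integral_add_right_eq_self _ q.1]
    congr 1; funext y
    simp only [hv]
    congr 3
    · ring_nf
    · ring_nf
  have hN3 : Nice (fun z : (ℝ × ℝ) × ℝ => u (z.1.1, z.2) * (starRingEnd ℂ) (u (z.1.1 + z.1.2, z.2 - z.1.2))) := by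
    refine hu.comp_mul hu.conj (g := fun z : (ℝ × ℝ) × ℝ => (z.1.1, z.2))
        (g' := fun z : (ℝ × ℝ) × ℝ => (z.1.1 + z.1.2, z.2 - z.1.2)) (by fun_prop) (by fun_prop) 1 (by norm_num) ?_
    rintro ⟨⟨x, y⟩, t⟩
    simp only [Prod.norm_def, one_mul]
    have a2 : ‖y‖ ≤ ‖x + y‖ + ‖x‖ := by simpa using norm_sub_le (x + y) x
    refine max_le (max_le ?_ ?_) ?_ <;>
    linarith [le_max_left ‖x‖ ‖t‖, le_max_right ‖x‖ ‖t‖, le_max_left ‖x + y‖ ‖t - y‖, norm_nonneg (x + y)]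
  have hI := hN3.integrable (μ := volume)
  have hI2 := hI.integral_prod_left (μ := volume) (ν := volume)
  have e3 : ∫ q : ℝ × ℝ, ∫ y, u (q.1, y) * (starRingEnd ℂ) (u (q.1 + q.2, y - q.2)) =
      ∫ τ : ℝ, ∫ p : ℝ × ℝ, u p * (starRingEnd ℂ) (u (p.1 + τ, p.2 - τ)) := by
    have := integral_prod_symm (μ := (volume : Measure ℝ)) (ν := (volume : Measure ℝ)) _ hI2
    rw [← Measure.volume_eq_prod] at this
    rw [this]
    congr 1; funext τ
    have hp : Nice (fun p : ℝ × ℝ => u p * (starRingEnd ℂ) (u (p.1 + τ, p.2 - τ))) := by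
      obtain ⟨M, _, hM⟩ := hu.conj.bdd
      exact hu.mul_bdd (hu.conj.meas.comp (by fun_prop)) M (fun x => hM _)
    rw [Measure.volume_eq_prod, integral_prod _ (by rw [← Measure.volume_eq_prod]; exact hp.integrable)]
  rw [e2, e3]
  exact norm_integral_le_integral_norm _

theorem kappa_int (A c : ℝ) (hc : 0 < c) :
    Integrable (fun u : ℝ => A * (1 + (c * u) ^ 2)⁻¹) ∧ ∫ u : ℝ, A * (1 + (c * u) ^ 2)⁻¹ = A * (Real.pi / c) := by
  constructor
  · exact ((integrable_inv_one_add_sq).comp_mul_left' hc.ne').const_mul A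
  · rw [integral_const_mul]
    rw [Measure.integral_comp_mul_left (fun u : ℝ => (1 + u ^ 2)⁻¹) c, integral_univ_inv_one_add_sq]
    rw [abs_of_pos (by positivity)]
    simp [div_eq_inv_mul]

theorem ttstar {F G : ℝ → ℂ} (hF : Nice F) (hG : Nice G) {φ : ℝ × ℝ → ℝ} (hφ : Measurable φ)
    {w : ℝ → ℝ} (hw : Nice (fun y => (w y : ℂ))) (hGw : ∀ y, G y ≠ 0 → 1 ≤ w y)
    (A c : ℝ) (hA : 0 ≤ A) (hc : 0 < c)
    (hK : ∀ x x', F x ≠ 0 → F x' ≠ 0 →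
      ‖∫ y, ((w y ^ 2 : ℝ) : ℂ) * Complex.exp (Complex.I * ((φ (x, y) - φ (x', y) : ℝ) : ℂ))‖
        ≤ A * (1 + (c * (x - x')) ^ 2)⁻¹) :
    ‖∫ p : ℝ × ℝ, F p.1 * G p.2 * Complex.exp (Complex.I * (φ p : ℂ))‖ ^ 2 ≤
      (A * (Real.pi / c)) * (∫ x, ‖F x‖ ^ 2) * ∫ y, ‖G y‖ ^ 2 := by
  set v : ℝ × ℝ → ℂ := fun p => (F p.1 * (w p.2 : ℂ)) * Complex.exp (Complex.I * (φ p : ℂ)) with hv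
  have hnexp : ∀ r : ℝ, ‖Complex.exp (Complex.I * (r : ℂ))‖ = 1 := fun r => by
    rw [mul_comm]; exact Complex.norm_exp_ofReal_mul_I r
  have hvN : Nice v := by
    refine Nice.mul_bdd ?_ (by fun_prop) 1 (fun x => (hnexp _).le)
    refine hF.comp_mul hw (g := fun p : ℝ × ℝ => p.1) (g' := fun p : ℝ × ℝ => p.2) (by fun_prop) (by fun_prop) 1 (by norm_num) ?_
    rintro ⟨x, y⟩
    simp only [Prod.norm_def, one_mul]
    exact max_le (by linarith [norm_nonneg y]) (by linarith [norm_nonneg x])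
  set g : ℝ → ℂ := fun y => G y / (w y : ℂ) with hg
  have hgG : ∀ y, ‖g y‖ ≤ ‖G y‖ := by
    intro y
    by_cases h : G y = 0
    · simp [hg, h]
    · have := hGw y h
      simp only [hg, norm_div, Complex.norm_real]
      exact div_le_self (norm_nonneg _) (this.trans (le_abs_self _))
  have hgN : Nice g := by
    obtain ⟨M, hM0, hM⟩ := hG.bdd
    obtain ⟨R, hR0, hR⟩ := hG.supp
    exact ⟨hG.meas.div hw.meas, ⟨M, hM0, fun y => (hgG y).trans (hM y)⟩, ⟨R, hR0, fun x hx => by simp [hg, hR x hx]⟩⟩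
  have e1 : ∫ p : ℝ × ℝ, F p.1 * G p.2 * Complex.exp (Complex.I * (φ p : ℂ)) = ∫ p, v p * g p.2 := by
    congr 1; funext p
    by_cases h : G p.2 = 0
    · simp [hg, h]
    · have h1 := hGw _ h
      have : (w p.2 : ℂ) ≠ 0 := by
        norm_cast; linarith
      simp only [hv, hg]
      field_simp
  have h1 := cs1 hvN hgN
  rw [e1]
  have hg2 : ∫ y, ‖g y‖ ^ 2 ≤ ∫ y, ‖G y‖ ^ 2 :=
    integral_mono hgN.integrable_sq hG.integrable_sq (fun y => by
      have := hgG y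
      dsimp only; gcongr)
  set κ : ℝ → ℝ := fun u => A * (1 + (c * u) ^ 2)⁻¹ with hκ
  obtain ⟨hκi, hκe⟩ := kappa_int A c hc
  have i1 : Integrable (fun p : ℝ × ℝ => ‖F p.2‖ ^ 2 * κ (p.1 - p.2)) := by
    have := hF.integrable_sq (μ := volume) |>.convolution_integrand (ContinuousLinearMap.mul ℝ ℝ) hκi
    exact this
  have i2 : Integrable (fun p : ℝ × ℝ => ‖F p.1‖ ^ 2 * κ (p.1 - p.2)) := by
    have := i1.swap
    refine this.congr (Filter.Eventually.of_forall ?_)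
    rintro ⟨x, y⟩
    simp only [Function.comp, Prod.swap, hκ]
    ring_nf
  have j2 : ∫ p : ℝ × ℝ, ‖F p.1‖ ^ 2 * κ (p.1 - p.2) = (A * (Real.pi / c)) * ∫ x, ‖F x‖ ^ 2 := by
    rw [Measure.volume_eq_prod, integral_prod _ (by rw [← Measure.volume_eq_prod]; exact i2)]
    rw [← integral_const_mul]
    congr 1; funext x
    simp only
    rw [integral_const_mul, integral_sub_left_eq_self (fun y => κ y) volume x, hκe]
    ring
  have j1 : ∫ p : ℝ × ℝ, ‖F p.2‖ ^ 2 * κ (p.1 - p.2) = (A * (Real.pi / c)) * ∫ x, ‖F x‖ ^ 2 := by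
    rw [← j2, Measure.volume_eq_prod, ← integral_prod_swap]
    congr 1; funext p
    simp only [Prod.swap, hκ]
    ring_nf
  have h2 : ‖∫ q : ℝ × ℝ, ∫ t, v (q.1, t) * (starRingEnd ℂ) (v (q.2, t))‖ ≤ (A * (Real.pi / c)) * ∫ x, ‖F x‖ ^ 2 := by
    refine (norm_integral_le_integral_norm _).trans ?_
    calc _ ≤ ∫ p : ℝ × ℝ, (1 / 2 : ℝ) * (‖F p.2‖ ^ 2 * κ (p.1 - p.2) + ‖F p.1‖ ^ 2 * κ (p.1 - p.2)) := by
            refine integral_mono_of_nonneg (Filter.Eventually.of_forall (fun p => norm_nonneg _))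
              ((i1.add i2).const_mul _) (Filter.Eventually.of_forall ?_)
            rintro ⟨x, x'⟩
            simp only
            have ee : ∫ t, v (x, t) * (starRingEnd ℂ) (v (x', t)) = F x * (starRingEnd ℂ) (F x') *
                ∫ y, ((w y ^ 2 : ℝ) : ℂ) * Complex.exp (Complex.I * ((φ (x, y) - φ (x', y) : ℝ) : ℂ)) := by
              rw [← integral_const_mul]
              congr 1; funext t
              simp only [hv, map_mul, Complex.conj_ofReal, ← Complex.exp_conj, Complex.conj_I]
              have : Complex.exp (Complex.I * ((φ (x, t) - φ (x', t) : ℝ) : ℂ)) =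
                Complex.exp (Complex.I * (φ (x, t) : ℂ)) * Complex.exp (-Complex.I * (φ (x', t) : ℂ)) := by
                rw [← Complex.exp_add]; push_cast; ring_nf
              rw [this]; push_cast; ring
            rw [ee, norm_mul, norm_mul, RCLike.norm_conj]
            have hκ0 : 0 ≤ κ (x - x') := by simp only [hκ]; positivity
            by_cases hx : F x = 0
            · simp only [hx, norm_zero, zero_mul]; positivity
            by_cases hx' : F x' = 0
            · simp only [hx', norm_zero, zero_mul, mul_zero]; positivity
            calc _ ≤ ‖F x‖ * ‖F x'‖ * κ (x - x') := by
                  gcongr; exact hK x x' hx hx'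
              _ ≤ _ := by
                  nlinarith [mul_nonneg hκ0 (sq_nonneg (‖F x‖ - ‖F x'‖))]
      _ = _ := by
            rw [integral_const_mul, integral_add i1 i2, j1, j2]; ring
  calc _ ≤ _ := h1
    _ ≤ (∫ y, ‖G y‖ ^ 2) * ((A * (Real.pi / c)) * ∫ x, ‖F x‖ ^ 2) :=
        mul_le_mul hg2 h2 (norm_nonneg _) (integral_nonneg (fun _ => sq_nonneg _))
    _ = _ := by ring

theorem autoc {f : ℝ → ℂ} (hf : Nice f) :
    Integrable (fun τ => ∫ x, ‖f x‖ ^ 2 * ‖f (x + τ)‖ ^ 2) ∧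
    ∫ τ, ∫ x, ‖f x‖ ^ 2 * ‖f (x + τ)‖ ^ 2 = (∫ x, ‖f x‖ ^ 2) ^ 2 := by
  have h0 := hf.integrable_sq (μ := volume)
  have h1 : Integrable (fun p : ℝ × ℝ => ‖f p.1‖ ^ 2 * ‖f p.2‖ ^ 2) := h0.mul_prod h0
  have h2 := shear_integrable h1
  simp only at h2
  refine ⟨h2.integral_prod_right (μ := volume) (ν := volume), ?_⟩
  have := integral_prod_symm (μ := (volume : Measure ℝ)) (ν := (volume : Measure ℝ)) _ h2
  rw [← Measure.volume_eq_prod] at this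
  rw [← this, shear_int (fun p : ℝ × ℝ => ‖f p.1‖ ^ 2 * ‖f p.2‖ ^ 2), Measure.volume_eq_prod,
    integral_prod_mul (fun x => ‖f x‖ ^ 2) (fun x => ‖f x‖ ^ 2), sq]

def E2 (f : ℝ → ℂ) : ℝ := ∫ x, ‖f x‖ ^ 2

theorem E2_nonneg (f : ℝ → ℂ) : 0 ≤ E2 f := integral_nonneg (fun _ => sq_nonneg _)

def tri (S : ℝ × ℝ → ℝ) (f₁ f₂ f₃ : ℝ → ℂ) : ℂ :=
  ∫ p : ℝ × ℝ, Complex.exp (Complex.I * (S p : ℂ)) * f₁ p.1 * f₂ p.2 * f₃ (p.1 + p.2)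

theorem norm_expI (r : ℝ) : ‖Complex.exp (Complex.I * (r : ℂ))‖ = 1 := by
  rw [mul_comm]; exact Complex.norm_exp_ofReal_mul_I r

theorem Nice.tensor {f g : ℝ → ℂ} (hf : Nice f) (hg : Nice g) :
    Nice (fun p : ℝ × ℝ => f p.1 * g p.2) := by
  refine hf.comp_mul hg (g := fun p : ℝ × ℝ => p.1) (g' := fun p : ℝ × ℝ => p.2) (by fun_prop) (by fun_prop) 1 (by norm_num) ?_
  rintro ⟨x, y⟩
  simp only [Prod.norm_def, one_mul]
  exact max_le (by linarith [norm_nonneg y]) (by linarith [norm_nonneg x])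

theorem Nice.shift {f : ℝ → ℂ} (hf : Nice f) (τ : ℝ) : Nice (fun x => f (x + τ)) := by
  refine hf.comp (by fun_prop) 1 ‖τ‖ (by norm_num) (norm_nonneg _) (fun x => ?_)
  simpa using norm_sub_le (x + τ) τ

theorem tau_bound {S : ℝ × ℝ → ℝ} (hS : Measurable S) {f₁ f₂ f₃ : ℝ → ℂ} (h1 : Nice f₁) (h2 : Nice f₂)
    (h3 : Nice f₃) (D : ℝ) (hD : 0 < D)
    (hB : ∀ τ : ℝ, τ ≠ 0 → ‖∫ p : ℝ × ℝ, (f₁ p.1 * (starRingEnd ℂ) (f₁ (p.1 + τ))) *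
        (f₂ p.2 * (starRingEnd ℂ) (f₂ (p.2 - τ))) *
        Complex.exp (Complex.I * ((S p - S (p.1 + τ, p.2 - τ) : ℝ) : ℂ))‖ ^ 2 ≤
        D ^ 3 / |τ| * (∫ x, ‖f₁ x‖ ^ 2 * ‖f₁ (x + τ)‖ ^ 2) * (∫ x, ‖f₂ x‖ ^ 2 * ‖f₂ (x - τ)‖ ^ 2)) :
    ‖tri S f₁ f₂ f₃‖ ^ 2 ≤ 3 * D * E2 f₁ * E2 f₂ * E2 f₃ := by
  set u : ℝ × ℝ → ℂ := fun p => f₁ p.1 * f₂ p.2 * Complex.exp (Complex.I * (S p : ℂ)) with hu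
  have huN : Nice u := (h1.tensor h2).mul_bdd (by fun_prop) 1 (fun x => (norm_expI _).le)
  have e1 : tri S f₁ f₂ f₃ = ∫ p : ℝ × ℝ, u p * f₃ (p.1 + p.2) := by
    unfold tri; congr 1; funext p; simp only [hu]; ring
  rw [e1]
  refine (cs2 huN h3).trans ?_
  set k1 : ℝ → ℝ := fun τ => ∫ x, ‖f₁ x‖ ^ 2 * ‖f₁ (x + τ)‖ ^ 2 with hk1
  set k2 : ℝ → ℝ := fun τ => ∫ x, ‖f₂ x‖ ^ 2 * ‖f₂ (x - τ)‖ ^ 2 with hk2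
  obtain ⟨i1, v1⟩ := autoc h1
  have i2 : Integrable k2 := by
    have := (autoc h2).1.comp_neg
    simpa [hk2, sub_eq_add_neg] using this
  have v2 : ∫ τ, k2 τ = E2 f₂ ^ 2 := by
    unfold E2
    rw [← (autoc h2).2, ← integral_neg_eq_self]
    simp [hk2, sub_eq_add_neg]
  have k1p : ∀ τ, 0 ≤ k1 τ := fun τ => integral_nonneg (fun x => by positivity)
  have k2p : ∀ τ, 0 ≤ k2 τ := fun τ => integral_nonneg (fun x => by positivity)
  have i12 : Integrable (fun τ => √(k1 τ) * √(k2 τ)) := by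
    refine (i1.add i2).mono' ?_ (Filter.Eventually.of_forall (fun τ => ?_))
    · exact (i1.aestronglyMeasurable.aemeasurable.sqrt.mul i2.aestronglyMeasurable.aemeasurable.sqrt).aestronglyMeasurable
    · rw [Real.norm_of_nonneg (by positivity)]
      have a := Real.sq_sqrt (k1p τ)
      have b := Real.sq_sqrt (k2p τ)
      simp only [Pi.add_apply]
      change _ ≤ k1 τ + k2 τ
      nlinarith [sq_nonneg (√(k1 τ) - √(k2 τ)), k1p τ, k2p τ]
  have v12 : ∫ τ, √(k1 τ) * √(k2 τ) ≤ E2 f₁ * E2 f₂ := by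
    have := cs0 (a := fun τ => √(k1 τ)) (b := fun τ => √(k2 τ))
      (by simpa only [Real.sq_sqrt (k1p _)] using i1) (by simpa only [Real.sq_sqrt (k2p _)] using i2) i12
    simp only [Real.sq_sqrt (k1p _), Real.sq_sqrt (k2p _)] at this
    rw [v2, v1] at this
    refine abs_le_of_sq_le_sq' ?_ (mul_nonneg (E2_nonneg _) (E2_nonneg _)) |>.2
    rw [mul_pow]; exact this
  -- trivial bound
  have triv : ∀ τ : ℝ, ‖∫ p : ℝ × ℝ, u p * (starRingEnd ℂ) (u (p.1 + τ, p.2 - τ))‖ ≤ E2 f₁ * E2 f₂ := by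
    intro τ
    have aux : ∀ {f : ℝ → ℂ} (_ : Nice f) (τ : ℝ), Integrable (fun x => ‖f x‖ * ‖f (x + τ)‖) ∧
        ∫ x, ‖f x‖ * ‖f (x + τ)‖ ≤ E2 f := by
      intro f hf τ
      have j1 : Integrable (fun x => ‖f x‖ * ‖f (x + τ)‖) := by
        simpa using (hf.mul (hf.shift τ)).integrable (μ := volume) |>.norm
      refine ⟨j1, ?_⟩
      have j2 := hf.integrable_sq (μ := volume)
      have j3 := (hf.shift τ).integrable_sq (μ := volume)
      have : ∫ x, ‖f x‖ * ‖f (x + τ)‖ ≤ ∫ x, (1 / 2 : ℝ) * (‖f x‖ ^ 2 + ‖f (x + τ)‖ ^ 2) :=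
        integral_mono j1 ((j2.add j3).const_mul _) (fun x => by
          dsimp only
          nlinarith [sq_nonneg (‖f x‖ - ‖f (x + τ)‖)])
      refine this.trans (le_of_eq ?_)
      rw [integral_const_mul, integral_add j2 j3, integral_add_right_eq_self (fun x => ‖f x‖ ^ 2)]
      unfold E2; ring
    obtain ⟨a1, b1⟩ := aux h1 τ
    obtain ⟨a2, b2⟩ := aux h2 (-τ)
    refine (norm_integral_le_integral_norm _).trans ?_
    have : ∀ p : ℝ × ℝ, ‖u p * (starRingEnd ℂ) (u (p.1 + τ, p.2 - τ))‖ =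
      (‖f₁ p.1‖ * ‖f₁ (p.1 + τ)‖) * (‖f₂ p.2‖ * ‖f₂ (p.2 + -τ)‖) := by
      intro p
      simp only [hu, norm_mul, RCLike.norm_conj, norm_expI, sub_eq_add_neg]
      ring
    simp_rw [this]
    rw [Measure.volume_eq_prod, integral_prod_mul (fun x => ‖f₁ x‖ * ‖f₁ (x + τ)‖) (fun x => ‖f₂ x‖ * ‖f₂ (x + -τ)‖)]
    exact mul_le_mul b1 b2 (integral_nonneg (fun x => by positivity)) (E2_nonneg _)
  have main : ∀ τ : ℝ, ‖∫ p : ℝ × ℝ, u p * (starRingEnd ℂ) (u (p.1 + τ, p.2 - τ))‖ ≤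
      (Set.Icc (-D) D).indicator (fun _ => E2 f₁ * E2 f₂) τ + D * (√(k1 τ) * √(k2 τ)) := by
    intro τ
    by_cases hτ : τ ∈ Set.Icc (-D) D
    · rw [Set.indicator_of_mem hτ]
      have := triv τ
      have : 0 ≤ D * (√(k1 τ) * √(k2 τ)) := by positivity
      linarith [triv τ]
    · rw [Set.indicator_of_notMem hτ, zero_add]
      have hτ' : D < |τ| := by
        by_contra h
        exact hτ (abs_le.1 (not_lt.1 h))
      have h0 : τ ≠ 0 := by
        intro h; rw [h] at hτ'; simp at hτ'; linarith
      refine abs_le_of_sq_le_sq' ?_ (by positivity) |>.2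
      have := hB τ h0
      have e : (∫ p : ℝ × ℝ, u p * (starRingEnd ℂ) (u (p.1 + τ, p.2 - τ))) = ∫ p : ℝ × ℝ, (f₁ p.1 * (starRingEnd ℂ) (f₁ (p.1 + τ))) *
        (f₂ p.2 * (starRingEnd ℂ) (f₂ (p.2 - τ))) *
        Complex.exp (Complex.I * ((S p - S (p.1 + τ, p.2 - τ) : ℝ) : ℂ)) := by
        congr 1; funext p
        simp only [hu, map_mul, ← Complex.exp_conj, Complex.conj_I, Complex.conj_ofReal]
        have : Complex.exp (Complex.I * ((S p - S (p.1 + τ, p.2 - τ) : ℝ) : ℂ)) =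
           Complex.exp (Complex.I * (S p : ℂ)) * Complex.exp (-Complex.I * (S (p.1 + τ, p.2 - τ) : ℂ)) := by
          rw [← Complex.exp_add]; push_cast; ring_nf
        rw [this]; ring
      rw [e]
      refine this.trans ?_
      rw [mul_pow, mul_pow, Real.sq_sqrt (k1p τ), Real.sq_sqrt (k2p τ), ← mul_assoc]
      have : D ^ 3 / |τ| ≤ D ^ 2 := by
        rw [div_le_iff₀ (by linarith)]
        nlinarith [mul_pos hD hD]
      have q1 := k1p τ
      have q2 := k2p τ
      change D ^ 3 / |τ| * k1 τ * k2 τ ≤ _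
      gcongr
  have iind : Integrable ((Set.Icc (-D) D).indicator (fun _ : ℝ => E2 f₁ * E2 f₂)) := by
    rw [integrable_indicator_iff measurableSet_Icc]
    exact integrableOn_const (by simp)
  have fin : ∫ τ : ℝ, ‖∫ p : ℝ × ℝ, u p * (starRingEnd ℂ) (u (p.1 + τ, p.2 - τ))‖ ≤ 3 * D * (E2 f₁ * E2 f₂) := by
    refine (integral_mono_of_nonneg (Filter.Eventually.of_forall (fun p => norm_nonneg _))
      (iind.add (i12.const_mul D)) (Filter.Eventually.of_forall main)).trans ?_
    simp only [Pi.add_apply]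
    rw [integral_add iind (i12.const_mul D), integral_const_mul, integral_indicator measurableSet_Icc]
    simp [Measure.real]
    rw [ENNReal.toReal_ofReal (by linarith)]
    nlinarith
  change E2 f₃ * _ ≤ _
  calc _ ≤ E2 f₃ * (3 * D * (E2 f₁ * E2 f₂)) := by
        have := E2_nonneg f₃
        gcongr
    _ = _ := by ring

theorem osc {α β : ℝ} (hab : α ≤ β) {b b1 b2 ψ ψ1 ψ2 ψ3 : ℝ → ℝ}
    (hb : ∀ y, HasDerivAt b (b1 y) y) (hb1 : ∀ y, HasDerivAt b1 (b2 y) y) (hb2 : Continuous b2)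
    (hψ : ∀ y, HasDerivAt ψ (ψ1 y) y) (hψ1 : ∀ y, HasDerivAt ψ1 (ψ2 y) y)
    (hψ2 : ∀ y, HasDerivAt ψ2 (ψ3 y) y) (hψ3 : Continuous ψ3)
    (e1 : b α = 0) (e2 : b β = 0) (e3 : b1 α = 0) (e4 : b1 β = 0)
    {m s L : ℝ} (hm : 0 < m) (hs : 0 < s) (hL : 0 ≤ L)
    (B0 : ∀ y ∈ Set.Icc α β, |b y| ≤ 4) (B1 : ∀ y ∈ Set.Icc α β, |b1 y| ≤ 16 / s)
    (B2 : ∀ y ∈ Set.Icc α β, |b2 y| ≤ 48 / s ^ 2)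
    (P1 : ∀ y ∈ Set.Icc α β, m ≤ |ψ1 y|) (P2 : ∀ y ∈ Set.Icc α β, |ψ2 y| ≤ L * m / s)
    (P3 : ∀ y ∈ Set.Icc α β, |ψ3 y| ≤ L * m / s ^ 2) :
    ‖∫ y in α..β, (b y : ℂ) * Complex.exp (Complex.I * (ψ y : ℂ))‖ ≤
      (48 + 52 * L + 12 * L ^ 2) / (m ^ 2 * s ^ 2) * (β - α) := by
  set g2 : ℝ → ℝ := fun y => b2 y / ψ1 y ^ 2 - 3 * b1 y * ψ2 y / ψ1 y ^ 3 - b y * ψ3 y / ψ1 y ^ 3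
    + 3 * b y * ψ2 y ^ 2 / ψ1 y ^ 4 with hg2
  set e : ℝ → ℂ := fun y => Complex.exp (Complex.I * (ψ y : ℂ)) with he
  have hne : ∀ y ∈ Set.Icc α β, ψ1 y ≠ 0 := fun y hy h => by
    have := P1 y hy; rw [h] at this; simp at this; linarith
  have hed : ∀ y, HasDerivAt e (Complex.I * (ψ1 y : ℂ) * e y) y := by
    intro y
    have := ((hψ y).ofReal_comp.const_mul Complex.I).cexp
    convert this using 1
    simp only [he]; ring
  set Φ : ℝ → ℂ := fun y => (-Complex.I * ((b y / ψ1 y : ℝ) : ℂ) +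
    ((b1 y / ψ1 y ^ 2 - b y * ψ2 y / ψ1 y ^ 3 : ℝ) : ℂ)) * e y with hΦ
  have hd : ∀ y ∈ Set.Icc α β, HasDerivAt Φ (((b y : ℂ) + (g2 y : ℂ)) * e y) y := by
    intro y hy
    have h0 := hne y hy
    have q1 : HasDerivAt (fun y => b y / ψ1 y) (b1 y / ψ1 y - b y * ψ2 y / ψ1 y ^ 2) y := by
      refine HasDerivAt.congr_deriv (f := fun y => b y / ψ1 y) ((hb y).div (hψ1 y) h0) ?_
      field_simp
    have q2 : HasDerivAt (fun y => b1 y / ψ1 y ^ 2 - b y * ψ2 y / ψ1 y ^ 3) (g2 y) y := by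
      refine HasDerivAt.congr_deriv (f := fun y => b1 y / ψ1 y ^ 2 - b y * ψ2 y / ψ1 y ^ 3)
        (((hb1 y).div ((hψ1 y).pow 2) (pow_ne_zero 2 h0)).sub
        (((hb y).mul (hψ2 y)).div ((hψ1 y).pow 3) (pow_ne_zero 3 h0))) ?_
      simp only [hg2, Pi.pow_apply, Pi.mul_apply]
      field_simp
      push_cast
      ring
    have := ((q1.ofReal_comp.const_mul (-Complex.I)).add q2.ofReal_comp).mul (hed y)
    refine HasDerivAt.congr_deriv (f := Φ) this ?_
    have h0' : (ψ1 y : ℂ) ≠ 0 := by exact_mod_cast h0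
    simp only [Pi.add_apply]
    push_cast
    field_simp
    linear_combination (-(e y * ψ1 y ^ 2 * b y)) * Complex.I_sq
  have cb : Continuous b := continuous_iff_continuousAt.2 (fun y => (hb y).continuousAt)
  have cb1 : Continuous b1 := continuous_iff_continuousAt.2 (fun y => (hb1 y).continuousAt)
  have cψ : Continuous ψ := continuous_iff_continuousAt.2 (fun y => (hψ y).continuousAt)
  have cψ1 : Continuous ψ1 := continuous_iff_continuousAt.2 (fun y => (hψ1 y).continuousAt)
  have cψ2 : Continuous ψ2 := continuous_iff_continuousAt.2 (fun y => (hψ2 y).continuousAt)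
  have ce : Continuous e := continuous_iff_continuousAt.2 (fun y => (hed y).continuousAt)
  have cg2 : ContinuousOn g2 (Set.Icc α β) := by
    have z2 : ∀ y ∈ Set.Icc α β, ψ1 y ^ 2 ≠ 0 := fun y hy => pow_ne_zero _ (hne y hy)
    have z3 : ∀ y ∈ Set.Icc α β, ψ1 y ^ 3 ≠ 0 := fun y hy => pow_ne_zero _ (hne y hy)
    have z4 : ∀ y ∈ Set.Icc α β, ψ1 y ^ 4 ≠ 0 := fun y hy => pow_ne_zero _ (hne y hy)
    refine (((ContinuousOn.div ?_ ?_ z2).sub (ContinuousOn.div ?_ ?_ z3)).sub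
      (ContinuousOn.div ?_ ?_ z3)).add (ContinuousOn.div ?_ ?_ z4)
    all_goals exact Continuous.continuousOn (by fun_prop)
  have ig : IntervalIntegrable (fun y => (g2 y : ℂ) * e y) volume α β := by
    apply ContinuousOn.intervalIntegrable
    rw [Set.uIcc_of_le hab]
    exact (Complex.continuous_ofReal.comp_continuousOn cg2).mul ce.continuousOn
  have ib : IntervalIntegrable (fun y => (b y : ℂ) * e y) volume α β := by
    apply Continuous.intervalIntegrable
    fun_prop
  have key : ∫ y in α..β, ((b y : ℂ) + (g2 y : ℂ)) * e y = Φ β - Φ α := by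
    apply intervalIntegral.integral_eq_sub_of_hasDerivAt
    · intro y hy
      rw [Set.uIcc_of_le hab] at hy
      exact hd y hy
    · simp_rw [add_mul]
      exact ib.add ig
  have z : Φ β - Φ α = 0 := by simp [hΦ, e1, e2, e3, e4]
  have key2 : ∫ y in α..β, (b y : ℂ) * e y = - ∫ y in α..β, (g2 y : ℂ) * e y := by
    rw [z] at key
    simp_rw [add_mul] at key
    rw [intervalIntegral.integral_add ib ig] at key
    exact eq_neg_of_add_eq_zero_left key
  rw [key2, norm_neg]
  have : ∀ y ∈ Set.uIoc α β, ‖(g2 y : ℂ) * e y‖ ≤ (48 + 52 * L + 12 * L ^ 2) / (m ^ 2 * s ^ 2) := by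
    intro y hy
    rw [Set.uIoc_of_le hab] at hy
    have hy : y ∈ Set.Icc α β := ⟨hy.1.le, hy.2⟩
    rw [norm_mul, norm_expI, mul_one, Complex.norm_real, Real.norm_eq_abs]
    have p1 := P1 y hy
    have p2 := P2 y hy
    have p3 := P3 y hy
    have t0 := B0 y hy
    have t1 := B1 y hy
    have t2 := B2 y hy
    have a1 : |b2 y / ψ1 y ^ 2| ≤ (48 / s ^ 2) / m ^ 2 := by
      rw [abs_div, abs_pow]; gcongr
    have a2 : |3 * b1 y * ψ2 y / ψ1 y ^ 3| ≤ (3 * (16 / s) * (L * m / s)) / m ^ 3 := by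
      rw [abs_div, abs_pow, abs_mul, abs_mul, abs_of_pos (by norm_num : (0:ℝ) < 3)]; gcongr
    have a3 : |b y * ψ3 y / ψ1 y ^ 3| ≤ (4 * (L * m / s ^ 2)) / m ^ 3 := by
      rw [abs_div, abs_pow, abs_mul]; gcongr
    have a4 : |3 * b y * ψ2 y ^ 2 / ψ1 y ^ 4| ≤ (3 * 4 * (L * m / s) ^ 2) / m ^ 4 := by
      rw [abs_div, abs_pow, abs_mul, abs_mul, abs_pow, abs_of_pos (by norm_num : (0:ℝ) < 3)]; gcongr
    calc |g2 y| ≤ (48 / s ^ 2) / m ^ 2 + (3 * (16 / s) * (L * m / s)) / m ^ 3 + (4 * (L * m / s ^ 2)) / m ^ 3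
          + (3 * 4 * (L * m / s) ^ 2) / m ^ 4 := by
          simp only [hg2]
          refine (abs_add_le _ _).trans (add_le_add ((abs_sub _ _).trans (add_le_add ((abs_sub _ _).trans (add_le_add a1 a2)) a3)) a4)
      _ = _ := by field_simp; ring
  refine (intervalIntegral.norm_integral_le_of_norm_le_const this).trans ?_
  rw [abs_of_nonneg (by linarith)]

def Sm (f : ℝ × ℝ → ℝ) : Prop := ContDiff ℝ (⊤ : ℕ∞) f

theorem Sm.cont {f} (h : Sm f) : Continuous f := ContDiff.continuous h

theorem Sm.hasFDeriv {f} (h : Sm f) (p : ℝ × ℝ) : HasFDerivAt f (fderiv ℝ f p) p :=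
  (ContDiff.differentiable h (by simp) p).hasFDerivAt

theorem Sm.line0 {f} (h : Sm f) (x y u v t : ℝ) :
    HasDerivAt (fun t => f (x + t * u, y + t * v)) (fderiv ℝ f (x + t * u, y + t * v) (u, v)) t := by
  have h1 : HasDerivAt (fun t : ℝ => x + t * u) u t := by
    simpa using ((hasDerivAt_id t).mul_const u).const_add x
  have h2 : HasDerivAt (fun t : ℝ => y + t * v) v t := by
    simpa using ((hasDerivAt_id t).mul_const v).const_add y
  exact (h.hasFDeriv _).comp_hasDerivAt t (h1.prodMk h2)

theorem Sm.dx {f} (h : Sm f) (x y : ℝ) : HasDerivAt (fun t => f (t, y)) (fderiv ℝ f (x, y) (1, 0)) x := by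
  have := h.line0 0 y 1 0 x
  simpa using this

theorem Sm.dy {f} (h : Sm f) (x y : ℝ) : HasDerivAt (fun t => f (x, t)) (fderiv ℝ f (x, y) (0, 1)) y := by
  have := h.line0 x 0 0 1 y
  simpa using this

theorem Sm.pdx_eq {f} (h : Sm f) : pdx f = fun p => fderiv ℝ f p (1, 0) := by
  ext p; exact (h.dx p.1 p.2).deriv

theorem Sm.pdy_eq {f} (h : Sm f) : pdy f = fun p => fderiv ℝ f p (0, 1) := by
  ext p; exact (h.dy p.1 p.2).deriv

theorem Sm.fd {f} (h : Sm f) (v : ℝ × ℝ) : Sm (fun p => fderiv ℝ f p v) := by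
  have : ContDiff ℝ (⊤ : ℕ∞) (fderiv ℝ f) := ContDiff.fderiv_right h (by norm_cast)
  exact this.clm_apply contDiff_const

theorem Sm.pdx {f} (h : Sm f) : Sm (pdx f) := by rw [h.pdx_eq]; exact h.fd _
theorem Sm.pdy {f} (h : Sm f) : Sm (pdy f) := by rw [h.pdy_eq]; exact h.fd _

theorem Sm.hx {f} (h : Sm f) (x y : ℝ) : HasDerivAt (fun t => f (t, y)) (_root_.pdx f (x, y)) x := by
  rw [h.pdx_eq]; exact h.dx x y

theorem Sm.hy {f} (h : Sm f) (x y : ℝ) : HasDerivAt (fun t => f (x, t)) (_root_.pdy f (x, y)) y := by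
  rw [h.pdy_eq]; exact h.dy x y

theorem Sm.line {f} (h : Sm f) (x y u v t : ℝ) :
    HasDerivAt (fun t => f (x + t * u, y + t * v))
      (u * _root_.pdx f (x + t * u, y + t * v) + v * _root_.pdy f (x + t * u, y + t * v)) t := by
  have := h.line0 x y u v t
  rw [h.pdx_eq, h.pdy_eq]
  convert this using 1
  have : ((u, v) : ℝ × ℝ) = u • ((1, 0) : ℝ × ℝ) + v • ((0, 1) : ℝ × ℝ) := by simp
  rw [this, map_add, map_smul, map_smul]
  simp

theorem Sm.comm {f} (h : Sm f) : _root_.pdx (_root_.pdy f) = _root_.pdy (_root_.pdx f) := by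
  rw [(h.pdy).pdx_eq, (h.pdx).pdy_eq, h.pdx_eq, h.pdy_eq]
  ext p
  have hd : DifferentiableAt ℝ (fderiv ℝ f) p := by
    have : ContDiff ℝ (⊤ : ℕ∞) (fderiv ℝ f) := ContDiff.fderiv_right h (by norm_cast)
    exact this.differentiable (by simp) p
  have e : ∀ v w : ℝ × ℝ, fderiv ℝ (fun q => fderiv ℝ f q v) p w = fderiv ℝ (fderiv ℝ f) p w v := by
    intro v w
    rw [fderiv_clm_apply hd (differentiableAt_const v)]
    simp
  rw [e, e]
  have := (ContDiff.contDiffAt (x := p) h).isSymmSndFDerivAt (by simp; exact WithTop.coe_le_coe.2 (le_top : (2 : ℕ∞) ≤ ⊤))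
  exact this _ _

theorem Sm.sub {f g} (h : Sm f) (h' : Sm g) : Sm (fun p => f p - g p) := ContDiff.sub h h'
theorem Sm.cmul {f} (h : Sm f) (c : ℝ) : Sm (fun p => c * f p) := ContDiff.mul contDiff_const h

theorem pdx_sub {f g} (h : Sm f) (h' : Sm g) : pdx (fun p => f p - g p) = fun p => pdx f p - pdx g p := by
  ext p; exact ((h.hx p.1 p.2).sub (h'.hx p.1 p.2)).deriv

theorem pdy_sub {f g} (h : Sm f) (h' : Sm g) : pdy (fun p => f p - g p) = fun p => pdy f p - pdy g p := by
  ext p; exact ((h.hy p.1 p.2).sub (h'.hy p.1 p.2)).deriv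

theorem pdx_cmul {f} (h : Sm f) (c : ℝ) : pdx (fun p => c * f p) = fun p => c * pdx f p := by
  ext p; exact ((h.hx p.1 p.2).const_mul c).deriv

theorem pdy_cmul {f} (h : Sm f) (c : ℝ) : pdy (fun p => c * f p) = fun p => c * pdy f p := by
  ext p; exact ((h.hy p.1 p.2).const_mul c).deriv

theorem DOp_sm {S} (h : Sm S) : Sm (DOp S) := (h.pdx.sub h.pdy).pdy.pdx

/-- `(∂x - ∂y) ∂x ∂y S = P`. -/
theorem DOp_eq {S} (h : Sm S) : DOp S = fun p => pdx (pdx (pdy S)) p - pdy (pdx (pdy S)) p := by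
  unfold DOp
  rw [pdy_sub h.pdx h.pdy, pdx_sub h.pdx.pdy h.pdy.pdy]
  rw [h.comm.symm, (h.pdy).comm]

theorem DOp_pdy {S} (h : Sm S) : DOp (pdy S) = pdy (DOp S) := by
  rw [DOp_eq h.pdy, DOp_eq h, pdy_sub h.pdy.pdx.pdx h.pdy.pdx.pdy]
  rw [h.pdy.comm, h.pdy.pdx.comm]

def DD (S : ℝ × ℝ → ℝ) (a b : ℕ) : ℝ × ℝ → ℝ := pdx^[a] (pdy^[b] (DOp S))

theorem sm_iter_y {f} (h : Sm f) (b : ℕ) : Sm (pdy^[b] f) := by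
  induction b with
  | zero => exact h
  | succ b ih => rw [Function.iterate_succ_apply']; exact ih.pdy

theorem sm_iter_x {f} (h : Sm f) (b : ℕ) : Sm (pdx^[b] f) := by
  induction b with
  | zero => exact h
  | succ b ih => rw [Function.iterate_succ_apply']; exact ih.pdx

theorem comm_iter {f} (h : Sm f) (a : ℕ) : pdy (pdx^[a] f) = pdx^[a] (pdy f) := by
  induction a with
  | zero => rfl
  | succ a ih =>
    rw [Function.iterate_succ_apply', Function.iterate_succ_apply', ← ih, (sm_iter_x h a).comm]

theorem DD_sm {S} (h : Sm S) (a b : ℕ) : Sm (DD S a b) := sm_iter_x (sm_iter_y (DOp_sm h) b) a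

theorem pdx_DD (S : ℝ × ℝ → ℝ) (a b : ℕ) : pdx (DD S a b) = DD S (a + 1) b := by
  unfold DD; rw [Function.iterate_succ_apply']

theorem pdy_DD {S : ℝ × ℝ → ℝ} (h : Sm S) (a b : ℕ) : pdy (DD S a b) = DD S a (b + 1) := by
  unfold DD; rw [comm_iter (sm_iter_y (DOp_sm h) b), Function.iterate_succ_apply' pdy]

theorem DD_cmul {S} (h : Sm S) (c : ℝ) (a b : ℕ) :
    DD (fun p => c * S p) a b = fun p => c * DD S a b p := by
  have h0 : DOp (fun p => c * S p) = fun p => c * DOp S p := by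
    rw [DOp_eq (h.cmul c), DOp_eq h, pdy_cmul h, pdx_cmul h.pdy, pdx_cmul h.pdy.pdx,
      pdy_cmul h.pdy.pdx]
    ext p; ring
  have h1 : pdy^[b] (DOp (fun p => c * S p)) = fun p => c * pdy^[b] (DOp S) p := by
    rw [h0]
    induction b with
    | zero => rfl
    | succ b ih =>
      rw [Function.iterate_succ_apply', Function.iterate_succ_apply', ih,
        pdy_cmul (sm_iter_y (DOp_sm h) b)]
  unfold DD
  rw [h1]
  induction a with
  | zero => rfl
  | succ a ih =>
    rw [Function.iterate_succ_apply', Function.iterate_succ_apply', ih,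
      pdx_cmul (sm_iter_x (sm_iter_y (DOp_sm h) b) a)]

/-- One-dimensional mean value theorem in convenient form. -/
theorem mvt1 {f f' : ℝ → ℝ} (h : ∀ x, HasDerivAt f (f' x) x) (a b : ℝ) :
    ∃ ξ ∈ Set.uIcc a b, f b - f a = f' ξ * (b - a) := by
  rcases lt_trichotomy a b with hab | hab | hab
  · obtain ⟨c, hc, h1⟩ := exists_hasDerivAt_eq_slope f f' hab
      (fun x _ => (h x).continuousAt.continuousWithinAt) (fun x _ => h x)
    refine ⟨c, ?_, ?_⟩
    · rw [Set.uIcc_of_le hab.le]; exact ⟨hc.1.le, hc.2.le⟩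
    · rw [h1]; field_simp [sub_ne_zero.2 hab.ne']
  · exact ⟨a, by simp, by rw [hab]; simp⟩
  · obtain ⟨c, hc, h1⟩ := exists_hasDerivAt_eq_slope f f' hab
      (fun x _ => (h x).continuousAt.continuousWithinAt) (fun x _ => h x)
    refine ⟨c, ?_, ?_⟩
    · rw [Set.uIcc_of_ge hab.le]; exact ⟨hc.1.le, hc.2.le⟩
    · rw [h1]; field_simp [sub_ne_zero.2 hab.ne']; ring

/-- Double mean value theorem. -/
theorem mvt2 {T} (h : Sm T) (x x' y τ : ℝ) :
    ∃ ξ ∈ Set.uIcc x' x, ∃ θ ∈ Set.Icc (0:ℝ) 1,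
      T (x, y) - T (x + τ, y - τ) - T (x', y) + T (x' + τ, y - τ) =
        -((x - x') * τ * (pdx (pdx T) (ξ + θ * τ, y - θ * τ) - pdy (pdx T) (ξ + θ * τ, y - θ * τ))) := by
  have d1 : ∀ t, HasDerivAt (fun t => T (t, y) - T (t + τ, y - τ)) (pdx T (t, y) - pdx T (t + τ, y - τ)) t := by
    intro t
    exact (h.hx t y).sub ((h.hx (t + τ) (y - τ)).comp_add_const t τ)
  obtain ⟨ξ, hξ, e1⟩ := mvt1 d1 x' x
  obtain ⟨θ, hθ, e2⟩ := mvt1 (h.pdx.line ξ y τ (-τ)) 0 1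
  refine ⟨ξ, hξ, θ, by simpa using hθ, ?_⟩
  simp only [zero_mul, add_zero, one_mul, sub_zero, mul_one, mul_neg, ← sub_eq_add_neg] at e2
  have : T (x, y) - T (x + τ, y - τ) - T (x', y) + T (x' + τ, y - τ) =
    T (x, y) - T (x + τ, y - τ) - (T (x', y) - T (x' + τ, y - τ)) := by ring
  rw [this, e1]
  have e3 : pdx T (ξ, y) - pdx T (ξ + τ, y - τ) = - (τ * (pdx (pdx T) (ξ + θ * τ, y - θ * τ)) +
     -τ * pdy (pdx T) (ξ + θ * τ, y - θ * τ)) := by linarith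
  rw [e3]; ring

/-- mean value estimate along a rectangle path -/
theorem mvt_rect {f} (h : Sm f) {a a' b b' M N : ℝ} {z w : ℝ × ℝ}
    (hz : z.1 ∈ Set.Icc a a' ∧ z.2 ∈ Set.Icc b b') (hw : w.1 ∈ Set.Icc a a' ∧ w.2 ∈ Set.Icc b b')
    (hM : ∀ q : ℝ × ℝ, q.1 ∈ Set.Icc a a' → q.2 ∈ Set.Icc b b' → |pdx f q| ≤ M)
    (hN : ∀ q : ℝ × ℝ, q.1 ∈ Set.Icc a a' → q.2 ∈ Set.Icc b b' → |pdy f q| ≤ N) :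
    |f z - f w| ≤ M * |z.1 - w.1| + N * |z.2 - w.2| := by
  obtain ⟨z1, z2⟩ := z
  obtain ⟨w1, w2⟩ := w
  simp only at *
  obtain ⟨ξ, hξ, e1⟩ := mvt1 (fun t => h.hx t z2) w1 z1
  obtain ⟨η, hη, e2⟩ := mvt1 (fun t => h.hy w1 t) w2 z2
  have : f (z1, z2) - f (w1, w2) = pdx f (ξ, z2) * (z1 - w1) + pdy f (w1, η) * (z2 - w2) := by
    rw [← e1, ← e2]; ring
  rw [this]
  refine (abs_add_le _ _).trans ?_
  rw [abs_mul, abs_mul]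
  gcongr
  · exact hM _ (Set.uIcc_subset_Icc hw.1 hz.1 hξ) hz.2
  · exact hN _ hw.1 (Set.uIcc_subset_Icc hw.2 hz.2 hη)

def wf (c s y : ℝ) : ℝ := max 0 (2 * (1 - ((y - c) / s) ^ 2))

theorem wf_nice {c s : ℝ} (hs : 0 < s) : Nice (fun y => (wf c s y : ℂ)) := by
  refine ⟨?_, ⟨2, by norm_num, fun y => ?_⟩, ⟨|c| + s, by positivity, fun y hy => ?_⟩⟩
  · unfold wf; fun_prop
  · rw [Complex.norm_real, Real.norm_eq_abs, wf, abs_of_nonneg (le_max_left _ _)]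
    apply max_le (by norm_num)
    nlinarith [sq_nonneg ((y - c) / s)]
  · have : s < |y - c| := by
      rw [Real.norm_eq_abs] at hy
      have := abs_sub_abs_le_abs_sub y c
      linarith
    have h2 : 1 ≤ ((y - c) / s) ^ 2 := by
      rw [div_pow, le_div_iff₀ (by positivity), one_mul, ← sq_abs (y - c)]
      gcongr
    rw [wf, max_eq_left (by linarith)]; simp

theorem wf_out {c s y : ℝ} (hs : 0 < s) (hy : y ∉ Set.Ioc (c - s) (c + s)) : wf c s y = 0 := by
  have : s ≤ |y - c| := by
    by_contra h
    push Not at h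
    rw [abs_lt] at h
    exact hy ⟨by linarith, by linarith⟩
  have h2 : 1 ≤ ((y - c) / s) ^ 2 := by
    rw [div_pow, le_div_iff₀ (by positivity), one_mul, ← sq_abs (y - c)]
    gcongr
  rw [wf, max_eq_left (by linarith)]

theorem zin {c s y : ℝ} (hs : 0 < s) (hy : y ∈ Set.Icc (c - s) (c + s)) : ((y - c) / s) ^ 2 ≤ 1 := by
  rw [div_pow, div_le_iff₀ (by positivity), one_mul]
  have := hy.1
  have := hy.2
  apply sq_le_sq'  <;> linarith

theorem wf_in {c s y : ℝ} (hs : 0 < s) (hy : y ∈ Set.Icc (c - s) (c + s)) :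
    wf c s y ^ 2 = 4 * (1 - ((y - c) / s) ^ 2) ^ 2 := by
  have h2 := zin hs hy
  rw [wf, max_eq_right (by linarith)]; ring

theorem kern {S : ℝ × ℝ → ℝ} (hS : Sm S) {x0 y0 s μ L : ℝ} (hs : 0 < s) (hμ : 0 < μ) (hL : 0 ≤ L)
    (h0 : ∀ q : ℝ × ℝ, q.1 ∈ Set.Icc x0 (x0 + s) → q.2 ∈ Set.Icc (y0 - 2 * s) (y0 + 3 * s) →
      μ ≤ |DOp S q| ∧ |pdy (DOp S) q| ≤ L * μ / s ∧ |pdy (pdy (DOp S)) q| ≤ L * μ / s ^ 2)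
    {x x' τ : ℝ} (hx : x ∈ Set.Icc x0 (x0 + s)) (hxt : x + τ ∈ Set.Icc x0 (x0 + s))
    (hx' : x' ∈ Set.Icc x0 (x0 + s)) (hxt' : x' + τ ∈ Set.Icc x0 (x0 + s)) :
    ‖∫ y, ((wf (y0 + s / 2) s y ^ 2 : ℝ) : ℂ) * Complex.exp (Complex.I *
      (((S (x, y) - S (x + τ, y - τ)) - (S (x', y) - S (x' + τ, y - τ)) : ℝ) : ℂ))‖
      ≤ (4 * (48 + 52 * L + 12 * L ^ 2) * s) * (1 + (s * μ * |τ| * (x - x')) ^ 2)⁻¹ := by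
  set c := y0 + s / 2 with hc
  set Δ : (ℝ × ℝ → ℝ) → ℝ → ℝ := fun T y => (T (x, y) - T (x + τ, y - τ)) - (T (x', y) - T (x' + τ, y - τ)) with hΔ
  have dΔ : ∀ T, Sm T → ∀ y, HasDerivAt (Δ T) (Δ (pdy T) y) y := by
    intro T hT y
    exact ((hT.hy x y).sub ((hT.hy (x + τ) (y - τ)).comp_sub_const y τ)).sub
      ((hT.hy x' y).sub ((hT.hy (x' + τ) (y - τ)).comp_sub_const y τ))
  have mΔ : ∀ T, Sm T → ∀ y ∈ Set.Icc (c - s) (c + s), ∃ q : ℝ × ℝ, q.1 ∈ Set.Icc x0 (x0 + s) ∧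
      q.2 ∈ Set.Icc (y0 - 2 * s) (y0 + 3 * s) ∧
      |Δ (pdy T) y| = |x - x'| * |τ| * |DOp T q| := by
    intro T hT y hy
    obtain ⟨ξ, hξ, θ, hθ, e⟩ := mvt2 hT.pdy x x' y τ
    refine ⟨(ξ + θ * τ, y - θ * τ), ?_, ?_, ?_⟩
    · have a1 : ξ ∈ Set.Icc x0 (x0 + s) := Set.uIcc_subset_Icc hx' hx hξ
      have a2 : ξ + τ ∈ Set.Icc x0 (x0 + s) := by
        have : ξ ∈ Set.Icc (x0 - τ) (x0 + s - τ) := by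
          refine Set.uIcc_subset_Icc ?_ ?_ hξ
          · exact ⟨by linarith [hxt'.1], by linarith [hxt'.2]⟩
          · exact ⟨by linarith [hxt.1], by linarith [hxt.2]⟩
        exact ⟨by linarith [this.1], by linarith [this.2]⟩
      have := (convex_Icc x0 (x0 + s)) a1 a2 (sub_nonneg.2 hθ.2) hθ.1 (by ring)
      simp only [smul_eq_mul] at this
      convert this using 1
      ring
    · have b1 : |τ| ≤ s := by
        rw [abs_le]; constructor <;> linarith [hx.1, hx.2, hxt.1, hxt.2]
      have b2 : |θ * τ| ≤ s := by
        rw [abs_mul, abs_of_nonneg hθ.1]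
        nlinarith [hθ.1, hθ.2, abs_nonneg τ]
      rw [abs_le] at b2
      have := hy.1
      have := hy.2
      constructor <;> simp only <;> linarith
    · have : Δ (pdy T) y = -((x - x') * τ * DOp T (ξ + θ * τ, y - θ * τ)) := by
        rw [DOp_eq hT]; simp only [hΔ]; rw [← e]; ring
      rw [this, abs_neg, abs_mul, abs_mul]
  have eI : ∫ y, ((wf c s y ^ 2 : ℝ) : ℂ) * Complex.exp (Complex.I * ((Δ S y : ℝ) : ℂ)) =
      ∫ y in (c - s)..(c + s), ((4 * (1 - ((y - c) / s) ^ 2) ^ 2 : ℝ) : ℂ) * Complex.exp (Complex.I * ((Δ S y : ℝ) : ℂ)) := by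
    rw [intervalIntegral.integral_of_le (by linarith)]
    rw [← setIntegral_eq_integral_of_forall_compl_eq_zero (s := Set.Ioc (c - s) (c + s))]
    · apply setIntegral_congr_fun measurableSet_Ioc
      intro y hy
      simp only
      rw [wf_in hs ⟨hy.1.le, hy.2⟩]
    · intro y hy
      rw [wf_out hs hy]; simp
  rw [show (∫ y, ((wf c s y ^ 2 : ℝ) : ℂ) * Complex.exp (Complex.I *
      (((S (x, y) - S (x + τ, y - τ)) - (S (x', y) - S (x' + τ, y - τ)) : ℝ) : ℂ))) = _ from eI]
  set t := s * μ * |τ| * (x - x') with ht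
  have T1 : ‖∫ y in (c - s)..(c + s), ((4 * (1 - ((y - c) / s) ^ 2) ^ 2 : ℝ) : ℂ) * Complex.exp (Complex.I * ((Δ S y : ℝ) : ℂ))‖ ≤ 8 * s := by
    have : ∀ y ∈ Set.uIoc (c - s) (c + s), ‖((4 * (1 - ((y - c) / s) ^ 2) ^ 2 : ℝ) : ℂ) * Complex.exp (Complex.I * ((Δ S y : ℝ) : ℂ))‖ ≤ 4 := by
      intro y hy
      rw [Set.uIoc_of_le (by linarith)] at hy
      rw [norm_mul, norm_expI, mul_one, Complex.norm_real, Real.norm_eq_abs, abs_of_nonneg (by positivity)]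
      have := zin hs ⟨hy.1.le, hy.2⟩
      nlinarith [sq_nonneg ((y - c) / s)]
    refine (intervalIntegral.norm_integral_le_of_norm_le_const this).trans ?_
    rw [abs_of_nonneg (by linarith)]; linarith
  rcases le_or_gt (t ^ 2) 1 with h1 | h1
  · refine T1.trans ?_
    rw [le_mul_inv_iff₀ (by positivity)]
    have : 0 ≤ L * s := by positivity
    have : 0 ≤ L ^ 2 * s := by positivity
    nlinarith
  · have hm : 0 < |x - x'| * |τ| * μ := by
      have : t ≠ 0 := by rintro h; rw [h] at h1; norm_num at h1
      have a1 : τ ≠ 0 := by rintro rfl; apply this; rw [ht]; simp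
      have a2 : x - x' ≠ 0 := by intro h; apply this; rw [ht, h]; simp
      positivity
    have zd : ∀ y, HasDerivAt (fun y : ℝ => (y - c) / s) (1 / s) y := fun y =>
      ((hasDerivAt_id y).sub_const c).div_const s
    have z1 : (c - s - c) / s = -1 := by field_simp; ring
    have z2 : (c + s - c) / s = 1 := by field_simp; ring
    have O := osc (α := c - s) (β := c + s) (by linarith)
      (b := fun y => 4 * (1 - ((y - c) / s) ^ 2) ^ 2)
      (b1 := fun y => -16 * ((y - c) / s) * (1 - ((y - c) / s) ^ 2) / s)
      (b2 := fun y => (-16 + 48 * ((y - c) / s) ^ 2) / s ^ 2)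
      (ψ := Δ S) (ψ1 := Δ (pdy S)) (ψ2 := Δ (pdy (pdy S))) (ψ3 := Δ (pdy (pdy (pdy S))))
      (by
        intro y
        refine HasDerivAt.congr_deriv (((((zd y).pow 2).const_sub 1).pow 2).const_mul 4) ?_
        simp only [Pi.pow_apply]
        push_cast; ring)
      (by
        intro y
        refine HasDerivAt.congr_deriv ((((zd y).const_mul (-16)).mul (((zd y).pow 2).const_sub 1)).div_const s) ?_
        simp only [Pi.pow_apply]
        push_cast; ring)
      (by fun_prop)
      (dΔ S hS) (dΔ _ hS.pdy) (dΔ _ hS.pdy.pdy)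
      (continuous_iff_continuousAt.2 (fun y => (dΔ _ hS.pdy.pdy.pdy y).continuousAt))
      (by simp only [z1]; norm_num) (by simp only [z2]; norm_num) (by simp only [z1]; norm_num)
      (by simp only [z2]; norm_num)
      hm hs hL
      (by
        intro y hy
        have := zin hs hy
        rw [abs_of_nonneg (by positivity)]
        nlinarith [sq_nonneg ((y - c) / s)])
      (by
        intro y hy
        have h2 := zin hs hy
        have h3 : |(y - c) / s| ≤ 1 := (sq_le_one_iff_abs_le_one _).1 h2
        rw [abs_div, abs_of_pos hs]
        gcongr
        rw [abs_mul, abs_mul]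
        have : |1 - ((y - c) / s) ^ 2| ≤ 1 := by
          rw [abs_le]; constructor <;> nlinarith [sq_nonneg ((y - c) / s)]
        calc |(-16:ℝ)| * |(y - c) / s| * |1 - ((y - c) / s) ^ 2| ≤ 16 * 1 * 1 := by
              gcongr; norm_num
          _ = 16 := by norm_num)
      (by
        intro y hy
        have h2 := zin hs hy
        rw [abs_div, abs_of_pos (by positivity : 0 < s ^ 2)]
        gcongr
        rw [abs_le]; constructor <;> nlinarith [sq_nonneg ((y - c) / s)])
      (by
        intro y hy
        obtain ⟨q, q1, q2, e⟩ := mΔ S hS y hy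
        rw [e]; gcongr; exact (h0 q q1 q2).1)
      (by
        intro y hy
        obtain ⟨q, q1, q2, e⟩ := mΔ _ hS.pdy y hy
        rw [e, DOp_pdy hS]
        calc _ ≤ |x - x'| * |τ| * (L * μ / s) := by gcongr; exact (h0 q q1 q2).2.1
          _ = _ := by ring)
      (by
        intro y hy
        obtain ⟨q, q1, q2, e⟩ := mΔ _ hS.pdy.pdy y hy
        rw [e, DOp_pdy hS.pdy, DOp_pdy hS]
        calc _ ≤ |x - x'| * |τ| * (L * μ / s ^ 2) := by gcongr; exact (h0 q q1 q2).2.2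
          _ = _ := by ring)
    refine O.trans ?_
    have et : (|x - x'| * |τ| * μ) ^ 2 * s ^ 2 = t ^ 2 := by
      rw [ht]; simp only [mul_pow, sq_abs]; ring
    rw [et, le_mul_inv_iff₀ (by positivity)]
    have : (48 + 52 * L + 12 * L ^ 2) / t ^ 2 * (c + s - (c - s)) * (1 + t ^ 2) =
      2 * (48 + 52 * L + 12 * L ^ 2) * s * ((1 + t ^ 2) / t ^ 2) := by ring
    rw [this]
    have h3 : (1 + t ^ 2) / t ^ 2 ≤ 2 := by rw [div_le_iff₀ (by linarith)]; linarith
    calc _ ≤ 2 * (48 + 52 * L + 12 * L ^ 2) * s * 2 := by gcongr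
      _ = _ := by ring

theorem box_est {S : ℝ × ℝ → ℝ} (hS : Sm S) {x0 y0 s μ L : ℝ} (hs : 0 < s) (hμ : 0 < μ) (hL : 0 ≤ L)
    (h0 : ∀ q : ℝ × ℝ, q.1 ∈ Set.Icc x0 (x0 + s) → q.2 ∈ Set.Icc (y0 - 2 * s) (y0 + 3 * s) →
      μ ≤ |DOp S q| ∧ |pdy (DOp S) q| ≤ L * μ / s ∧ |pdy (pdy (DOp S)) q| ≤ L * μ / s ^ 2)
    {f₁ f₂ f₃ : ℝ → ℂ} (h1 : Nice f₁) (h2 : Nice f₂) (h3 : Nice f₃)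
    (s1 : ∀ x, f₁ x ≠ 0 → x ∈ Set.Ico x0 (x0 + s)) (s2 : ∀ x, f₂ x ≠ 0 → x ∈ Set.Ico y0 (y0 + s))
    (D : ℝ) (hD : 0 < D) (hD3 : D ^ 3 = 4 * (48 + 52 * L + 12 * L ^ 2) * Real.pi / μ) :
    ‖tri S f₁ f₂ f₃‖ ^ 2 ≤ 3 * D * E2 f₁ * E2 f₂ * E2 f₃ := by
  refine tau_bound hS.cont.measurable h1 h2 h3 D hD ?_
  intro τ hτ
  have hSm : Measurable S := hS.cont.measurable
  have := ttstar (F := fun x => f₁ x * (starRingEnd ℂ) (f₁ (x + τ))) (G := fun y => f₂ y * (starRingEnd ℂ) (f₂ (y - τ)))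
    (h1.mul (h1.shift τ).conj) (h2.mul (by simpa [sub_eq_add_neg] using (h2.shift (-τ)).conj))
    (φ := fun p => S p - S (p.1 + τ, p.2 - τ)) (by fun_prop)
    (w := wf (y0 + s / 2) s) (wf_nice hs) (by
      intro y hy
      have hy := s2 y (left_ne_zero_of_mul hy)
      unfold wf
      apply le_max_of_le_right
      have : ((y - (y0 + s / 2)) / s) ^ 2 ≤ 1 / 4 := by
        rw [div_pow, div_le_iff₀ (by positivity)]
        have := hy.1
        have := hy.2
        nlinarith
      linarith)
    (4 * (48 + 52 * L + 12 * L ^ 2) * s) (s * μ * |τ|) (by positivity) (by positivity) (by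
      intro x x' hx hx'
      have a1 := s1 _ (left_ne_zero_of_mul hx)
      have a2 := s1 (x + τ) (by intro h; apply hx; simp [h])
      have a3 := s1 _ (left_ne_zero_of_mul hx')
      have a4 := s1 (x' + τ) (by intro h; apply hx'; simp [h])
      exact kern hS hs hμ hL h0 ⟨a1.1, a1.2.le⟩ ⟨a2.1, a2.2.le⟩ ⟨a3.1, a3.2.le⟩ ⟨a4.1, a4.2.le⟩)
  refine this.trans (le_of_eq ?_)
  simp only [norm_mul, RCLike.norm_conj, mul_pow]
  congr 2
  rw [hD3]
  have : |τ| ≠ 0 := by simpa using hτ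
  field_simp

theorem le_of_sqq {a b : ℝ} (h : a ^ 2 ≤ b ^ 2) (hb : 0 ≤ b) : a ≤ b := le_of_abs_le (by
  have := Real.sqrt_le_sqrt h
  rwa [Real.sqrt_sq_eq_abs, Real.sqrt_sq hb] at this)

def Nm (f : ℝ → ℂ) : ℝ := Real.sqrt (E2 f)

theorem Nm_nonneg (f : ℝ → ℂ) : 0 ≤ Nm f := Real.sqrt_nonneg _
theorem Nm_sq (f : ℝ → ℂ) : Nm f ^ 2 = E2 f := Real.sq_sqrt (E2_nonneg f)

theorem Nice.ind {f : ℝ → ℂ} (hf : Nice f) {A : Set ℝ} (hA : MeasurableSet A) : Nice (A.indicator f) := by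
  obtain ⟨M, hM0, hM⟩ := hf.bdd
  obtain ⟨R, hR0, hR⟩ := hf.supp
  refine ⟨hf.meas.indicator hA, ⟨M, hM0, fun x => (norm_indicator_le_norm_self _ _).trans (hM x)⟩, ⟨R, hR0, fun x hx => ?_⟩⟩
  simp [Set.indicator, hR x hx]

theorem Nice.sq_int {f : ℝ → ℂ} (hf : Nice f) : Integrable (fun x => ‖f x‖ ^ 2) := hf.integrable_sq

theorem E2_ind_le {f : ℝ → ℂ} (hf : Nice f) {A : Set ℝ} (hA : MeasurableSet A) : E2 (A.indicator f) ≤ E2 f := by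
  refine integral_mono (hf.ind hA).sq_int hf.sq_int (fun x => ?_)
  have := norm_indicator_le_norm_self (s := A) f x
  simp only
  gcongr

theorem E2_Ico (f : ℝ → ℂ) {a b : ℝ} (hab : a ≤ b) : E2 ((Set.Ico a b).indicator f) = ∫ x in a..b, ‖f x‖ ^ 2 := by
  rw [intervalIntegral.integral_of_le hab, ← integral_Ico_eq_integral_Ioc, ← integral_indicator measurableSet_Ico]
  unfold E2
  congr 1; funext x
  by_cases h : x ∈ Set.Ico a b <;> simp [h]

def pc (f : ℝ → ℂ) (x0 s : ℝ) (i : ℕ) : ℝ → ℂ := (Set.Ico (x0 + i * s) (x0 + (i + 1) * s)).indicator f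
def pc2 (f : ℝ → ℂ) (x0 s : ℝ) (i : ℕ) : ℝ → ℂ := (Set.Ico (x0 + i * s) (x0 + (i + 2) * s)).indicator f

theorem Nice.pc {f : ℝ → ℂ} (hf : Nice f) (x0 s : ℝ) (i : ℕ) : Nice (pc f x0 s i) := hf.ind measurableSet_Ico
theorem Nice.pc2 {f : ℝ → ℂ} (hf : Nice f) (x0 s : ℝ) (i : ℕ) : Nice (pc2 f x0 s i) := hf.ind measurableSet_Ico

theorem sum_pc {f : ℝ → ℂ} (hf : Nice f) (x0 : ℝ) {s : ℝ} (hs : 0 < s) (M : ℕ) :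
    ∑ i ∈ Finset.range M, E2 (pc f x0 s i) ≤ E2 f := by
  have h1 : ∀ i : ℕ, E2 (pc f x0 s i) = ∫ x in (x0 + i * s)..(x0 + ((i + 1 : ℕ) : ℝ) * s), ‖f x‖ ^ 2 := by
    intro i
    have : x0 + (i:ℝ) * s ≤ x0 + ((i:ℝ) + 1) * s := by nlinarith
    rw [pc, E2_Ico f this]; push_cast; rfl
  simp_rw [h1]
  rw [intervalIntegral.sum_integral_adjacent_intervals (a := fun i : ℕ => x0 + (i:ℝ) * s)
    (fun k _ => hf.sq_int.intervalIntegrable)]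
  have : x0 + ((0:ℕ):ℝ) * s ≤ x0 + (M:ℝ) * s := by push_cast; nlinarith [(Nat.cast_nonneg M : (0:ℝ) ≤ M)]
  rw [← E2_Ico f this]
  exact E2_ind_le hf measurableSet_Ico

theorem pc2_eq {f : ℝ → ℂ} (hf : Nice f) (x0 : ℝ) {s : ℝ} (hs : 0 < s) (i : ℕ) :
    E2 (pc2 f x0 s i) = E2 (pc f x0 s i) + E2 (pc f x0 s (i + 1)) := by
  have a1 : x0 + (i:ℝ) * s ≤ x0 + ((i:ℝ) + 1) * s := by nlinarith
  have a2 : x0 + ((i + 1 : ℕ):ℝ) * s ≤ x0 + (((i + 1 : ℕ):ℝ) + 1) * s := by nlinarith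
  have a3 : x0 + (i:ℝ) * s ≤ x0 + ((i:ℝ) + 2) * s := by nlinarith
  rw [pc, pc, pc2, E2_Ico f a1, E2_Ico f a2, E2_Ico f a3]
  have : x0 + ((i:ℝ) + 1) * s = x0 + ((i + 1 : ℕ):ℝ) * s := by push_cast; rfl
  rw [this, intervalIntegral.integral_add_adjacent_intervals hf.sq_int.intervalIntegrable hf.sq_int.intervalIntegrable]
  congr 1; push_cast; ring

theorem sum_pc2 {f : ℝ → ℂ} (hf : Nice f) (x0 : ℝ) {s : ℝ} (hs : 0 < s) (M : ℕ) :
    ∑ i ∈ Finset.range M, E2 (pc2 f x0 s i) ≤ 2 * E2 f := by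
  simp_rw [pc2_eq hf x0 hs]
  rw [Finset.sum_add_distrib]
  have h1 := sum_pc hf x0 hs M
  have h2 := sum_pc hf x0 hs (M + 1)
  rw [Finset.sum_range_succ'] at h2
  have := E2_nonneg (pc f x0 s 0)
  linarith

theorem tri_integrable {S : ℝ × ℝ → ℝ} (hS : Measurable S) {f₁ f₂ f₃ : ℝ → ℂ} (h1 : Nice f₁) (h2 : Nice f₂)
    (h3 : Nice f₃) : Nice (fun p : ℝ × ℝ => Complex.exp (Complex.I * (S p : ℂ)) * f₁ p.1 * f₂ p.2 * f₃ (p.1 + p.2)) := by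
  have m1 := h1.meas
  have m3 := h3.meas
  obtain ⟨M, hM0, hM⟩ := h3.bdd
  have := ((h1.tensor h2).mul_bdd (g := fun p => Complex.exp (Complex.I * (S p : ℂ)) * f₃ (p.1 + p.2)) (by fun_prop) M
    (fun p => by rw [norm_mul, norm_expI, one_mul]; exact hM _))
  convert this using 2
  ring

theorem tri_add1 {S : ℝ × ℝ → ℝ} (hS : Measurable S) {f₁ g₁ f₂ f₃ : ℝ → ℂ} (h1 : Nice f₁) (h1' : Nice g₁) (h2 : Nice f₂)
    (h3 : Nice f₃) : tri S (fun x => f₁ x + g₁ x) f₂ f₃ = tri S f₁ f₂ f₃ + tri S g₁ f₂ f₃ := by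
  unfold tri
  rw [← integral_add (tri_integrable hS h1 h2 h3).integrable (tri_integrable hS h1' h2 h3).integrable]
  congr 1; funext p; ring

theorem tri_add2 {S : ℝ × ℝ → ℝ} (hS : Measurable S) {f₁ g₂ f₂ f₃ : ℝ → ℂ} (h1 : Nice f₁) (h2' : Nice g₂) (h2 : Nice f₂)
    (h3 : Nice f₃) : tri S f₁ (fun x => f₂ x + g₂ x) f₃ = tri S f₁ f₂ f₃ + tri S f₁ g₂ f₃ := by
  unfold tri
  rw [← integral_add (tri_integrable hS h1 h2 h3).integrable (tri_integrable hS h1 h2' h3).integrable]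
  congr 1; funext p; ring

theorem pc_split (f : ℝ → ℂ) (x0 : ℝ) {s : ℝ} (hs : 0 < s) (i : ℕ) :
    pc f x0 s i = fun x => pc f x0 (s / 2) (2 * i) x + pc f x0 (s / 2) (2 * i + 1) x := by
  funext x
  simp only [pc, Set.indicator, Set.mem_Ico]
  push_cast
  have e1 : x0 + 2 * (i:ℝ) * (s / 2) = x0 + i * s := by ring
  have e2 : x0 + (2 * (i:ℝ) + 1) * (s / 2) = x0 + i * s + s / 2 := by ring
  have e3 : x0 + (2 * (i:ℝ) + 1 + 1) * (s / 2) = x0 + i * s + s := by ring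
  have e4 : x0 + ((i:ℝ) + 1) * s = x0 + i * s + s := by ring
  rw [e1, e2, e3, e4]
  split_ifs <;> first | (exfalso; grind) | simp

theorem tri_split {S : ℝ × ℝ → ℝ} (hS : Measurable S) {f₁ f₂ f₃ : ℝ → ℂ} (h1 : Nice f₁) (h2 : Nice f₂)
    (h3 : Nice f₃) (x0 y0 : ℝ) {s : ℝ} (hs : 0 < s) (i k : ℕ) :
    tri S (pc f₁ x0 s i) (pc f₂ y0 s k) f₃ = ∑ q ∈ Finset.range 2 ×ˢ Finset.range 2,
      tri S (pc f₁ x0 (s / 2) (2 * i + q.1)) (pc f₂ y0 (s / 2) (2 * k + q.2)) f₃ := by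
  rw [pc_split f₁ x0 hs, pc_split f₂ y0 hs]
  rw [tri_add1 hS (h1.pc _ _ _) (h1.pc _ _ _) (by rw [← pc_split f₂ y0 hs]; exact h2.pc _ _ _) h3]
  rw [tri_add2 hS (h1.pc _ _ _) (h2.pc _ _ _) (h2.pc _ _ _) h3, tri_add2 hS (h1.pc _ _ _) (h2.pc _ _ _) (h2.pc _ _ _) h3]
  rw [Finset.sum_product]
  simp [Finset.sum_range_succ]

theorem tri_triv {S : ℝ × ℝ → ℝ} (hS : Measurable S) {f₁ f₂ f₃ : ℝ → ℂ} (h1 : Nice f₁) (h2 : Nice f₂)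
    (h3 : Nice f₃) {x0 s : ℝ} (hs : 0 < s) (s1 : ∀ x, f₁ x ≠ 0 → x ∈ Set.Ico x0 (x0 + s)) :
    ‖tri S f₁ f₂ f₃‖ ≤ Real.sqrt s * Nm f₁ * Nm f₂ * Nm f₃ := by
  have hN := tri_integrable hS h1 h2 h3
  unfold tri
  refine (norm_integral_le_integral_norm _).trans ?_
  have hI := hN.integrable (μ := (volume : Measure (ℝ × ℝ))).norm
  rw [Measure.volume_eq_prod] at hI ⊢
  rw [integral_prod _ hI]
  have b1 : ∀ x, ∫ y, ‖Complex.exp (Complex.I * (S (x, y) : ℂ)) * f₁ x * f₂ y * f₃ (x + y)‖ ≤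
      ‖f₁ x‖ * (Nm f₂ * Nm f₃) := by
    intro x
    simp only [norm_mul, norm_expI, one_mul]
    simp_rw [mul_assoc]
    rw [integral_const_mul]
    gcongr
    have h3' : Nice (fun y => f₃ (x + y)) := by simpa [add_comm] using h3.shift x
    have e := cs0 (a := fun y => ‖f₂ y‖) (b := fun y => ‖f₃ (x + y)‖) h2.sq_int h3'.sq_int
      (by simpa using (h2.mul h3').integrable.norm)
    rw [integral_add_left_eq_self (fun y => ‖f₃ y‖ ^ 2) x] at e
    have e2 : (Nm f₂ * Nm f₃) ^ 2 = E2 f₂ * E2 f₃ := by rw [mul_pow, Nm_sq, Nm_sq]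
    refine le_of_sqq (e.trans (le_of_eq e2.symm)) (mul_nonneg (Nm_nonneg _) (Nm_nonneg _))
  have i1 : Integrable (fun x => ∫ y, ‖Complex.exp (Complex.I * (S (x, y) : ℂ)) * f₁ x * f₂ y * f₃ (x + y)‖) := hI.integral_prod_left
  refine (integral_mono i1 (h1.integrable.norm.mul_const _) b1).trans ?_
  rw [integral_mul_const]
  have b2 : ∫ x, ‖f₁ x‖ ≤ Real.sqrt s * Nm f₁ := by
    have : ∀ x, ‖f₁ x‖ = (Set.Ico x0 (x0 + s)).indicator (fun _ => (1:ℝ)) x * ‖f₁ x‖ := by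
      intro x
      by_cases h : f₁ x = 0
      · simp [h]
      · simp [s1 x h]
    have j : (fun x => (Set.Ico x0 (x0 + s)).indicator (fun _ => (1:ℝ)) x ^ 2) = (Set.Ico x0 (x0 + s)).indicator (fun _ => (1:ℝ)) := by
      funext x; by_cases h : x ∈ Set.Ico x0 (x0 + s) <;> simp [h]
    have e := cs0 (a := (Set.Ico x0 (x0 + s)).indicator (fun _ => (1:ℝ))) (b := fun x => ‖f₁ x‖) (by
      rw [j]; exact (integrable_indicator_iff measurableSet_Ico).2 (by simp)) h1.sq_int
    rw [j] at e
    simp_rw [← this] at e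
    rw [integral_indicator measurableSet_Ico] at e
    simp only [integral_const, MeasurableSet.univ, measureReal_restrict_apply, Set.univ_inter, Real.volume_real_Ico, smul_eq_mul, mul_one] at e
    rw [show x0 + s - x0 = s by ring, max_eq_left hs.le] at e
    have e2 : (Real.sqrt s * Nm f₁) ^ 2 = s * E2 f₁ := by rw [mul_pow, Nm_sq, Real.sq_sqrt hs.le]
    exact le_of_sqq ((e h1.integrable.norm).trans (le_of_eq e2.symm)) (mul_nonneg (Real.sqrt_nonneg _) (Nm_nonneg _))
  calc _ ≤ (Real.sqrt s * Nm f₁) * (Nm f₂ * Nm f₃) := by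
        gcongr
        exact mul_nonneg (Nm_nonneg _) (Nm_nonneg _)
    _ = _ := by ring

theorem fin_cs (a b c : ℕ → ℝ) (M : ℕ) (F : Finset (ℕ × ℕ))
    (hF : F ⊆ Finset.range M ×ˢ Finset.range M) (N A B C : ℝ) (hN : 0 ≤ N)
    (hA : ∑ i ∈ Finset.range M, a i ^ 2 ≤ A) (hB : ∑ i ∈ Finset.range M, b i ^ 2 ≤ B)
    (hC : ∑ i ∈ Finset.range (2 * M), c i ^ 2 ≤ C)
    (hcol : ∀ i, ((F.filter (fun q => q.1 = i)).card : ℝ) ≤ N) :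
    (∑ q ∈ F, a q.1 * (b q.2 * c (q.1 + q.2))) ^ 2 ≤ N * A * (B * C) := by
  have hA0 : 0 ≤ A := (Finset.sum_nonneg (fun i _ => sq_nonneg (a i))).trans hA
  have hB0 : 0 ≤ B := (Finset.sum_nonneg (fun i _ => sq_nonneg (b i))).trans hB
  refine (Finset.sum_mul_sq_le_sq_mul_sq F _ _).trans ?_
  have u1 : ∑ q ∈ F, a q.1 ^ 2 ≤ N * A := by
    have : ∑ q ∈ F, a q.1 ^ 2 = ∑ i ∈ Finset.range M, ∑ q ∈ F.filter (fun q => q.1 = i), a q.1 ^ 2 := by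
      rw [Finset.sum_fiberwise_of_maps_to]
      intro q hq
      exact (Finset.mem_product.1 (hF hq)).1
    rw [this]
    calc _ ≤ ∑ i ∈ Finset.range M, N * a i ^ 2 := by
          apply Finset.sum_le_sum
          intro i _
          have : ∑ q ∈ F.filter (fun q => q.1 = i), a q.1 ^ 2 = ∑ q ∈ F.filter (fun q => q.1 = i), a i ^ 2 := by
            apply Finset.sum_congr rfl
            intro q hq
            rw [(Finset.mem_filter.1 hq).2]
          rw [this, Finset.sum_const, nsmul_eq_mul]
          gcongr
          exact hcol i
      _ = N * ∑ i ∈ Finset.range M, a i ^ 2 := by rw [Finset.mul_sum]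
      _ ≤ _ := by gcongr
  have u2 : ∑ q ∈ F, (b q.2 * c (q.1 + q.2)) ^ 2 ≤ B * C := by
    have inj : Set.InjOn (fun q : ℕ × ℕ => (q.2, q.1 + q.2)) F := by
      rintro ⟨x, y⟩ _ ⟨x', y'⟩ _ h
      simp only [Prod.mk.injEq] at h ⊢
      omega
    have e1 : ∑ q ∈ F, (b q.2 * c (q.1 + q.2)) ^ 2 =
        ∑ r ∈ F.image (fun q : ℕ × ℕ => (q.2, q.1 + q.2)), (b r.1 * c r.2) ^ 2 := by
      rw [Finset.sum_image inj]
    rw [e1]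
    calc _ ≤ ∑ r ∈ Finset.range M ×ˢ Finset.range (2 * M), (b r.1 * c r.2) ^ 2 := by
          apply Finset.sum_le_sum_of_subset_of_nonneg
          · intro r hr
            obtain ⟨q, hq, rfl⟩ := Finset.mem_image.1 hr
            have := Finset.mem_product.1 (hF hq)
            simp only [Finset.mem_range, Finset.mem_product] at *
            omega
          · intros; positivity
      _ = (∑ i ∈ Finset.range M, b i ^ 2) * ∑ i ∈ Finset.range (2 * M), c i ^ 2 := by
          rw [Finset.sum_product, Finset.sum_mul_sum]; simp_rw [mul_pow]
      _ ≤ _ := by gcongr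
  gcongr

theorem orth {S : ℝ × ℝ → ℝ} {f₁ f₂ f₃ : ℝ → ℂ} (h1 : Nice f₁) (h2 : Nice f₂)
    (h3 : Nice f₃) (x0 y0 : ℝ) {s : ℝ} (hs : 0 < s) (M : ℕ) (F : Finset (ℕ × ℕ))
    (hF : F ⊆ Finset.range M ×ˢ Finset.range M) (N A : ℝ) (hN : 0 ≤ N) (hA : 0 ≤ A)
    (hcol : (∀ i, ((F.filter (fun q => q.1 = i)).card : ℝ) ≤ N) ∨
      (∀ i, ((F.filter (fun q => q.2 = i)).card : ℝ) ≤ N))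
    (hest : ∀ q ∈ F, ∀ g : ℝ → ℂ, Nice g → ‖tri S (pc f₁ x0 s q.1) (pc f₂ y0 s q.2) g‖ ≤
      A * Nm (pc f₁ x0 s q.1) * Nm (pc f₂ y0 s q.2) * Nm g) :
    ‖∑ q ∈ F, tri S (pc f₁ x0 s q.1) (pc f₂ y0 s q.2) f₃‖ ≤ A * Real.sqrt (2 * N) * Nm f₁ * Nm f₂ * Nm f₃ := by
  set a : ℕ → ℝ := fun i => Nm (pc f₁ x0 s i)
  set b : ℕ → ℝ := fun i => Nm (pc f₂ y0 s i)
  set c : ℕ → ℝ := fun i => Nm (pc2 f₃ (x0 + y0) s i)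
  have e : ∀ q ∈ F, ‖tri S (pc f₁ x0 s q.1) (pc f₂ y0 s q.2) f₃‖ ≤ A * (a q.1 * (b q.2 * c (q.1 + q.2))) := by
    intro q hq
    have := hest q hq (pc2 f₃ (x0 + y0) s (q.1 + q.2)) (h3.pc2 _ _ _)
    have e2 : tri S (pc f₁ x0 s q.1) (pc f₂ y0 s q.2) (pc2 f₃ (x0 + y0) s (q.1 + q.2)) =
        tri S (pc f₁ x0 s q.1) (pc f₂ y0 s q.2) f₃ := by
      unfold tri
      congr 1; funext p
      by_cases u : p.1 ∈ Set.Ico (x0 + q.1 * s) (x0 + (q.1 + 1) * s)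
      · by_cases v : p.2 ∈ Set.Ico (y0 + q.2 * s) (y0 + (q.2 + 1) * s)
        · have : p.1 + p.2 ∈ Set.Ico (x0 + y0 + ((q.1 + q.2 : ℕ) : ℝ) * s) (x0 + y0 + (((q.1 + q.2 : ℕ) : ℝ) + 2) * s) := by
            have := u.1
            have := u.2
            have := v.1
            have := v.2
            push_cast
            constructor <;> nlinarith
          rw [pc2, Set.indicator_of_mem this]
        · rw [show pc f₂ y0 s q.2 p.2 = 0 from Set.indicator_of_notMem v _]; simp
      · rw [show pc f₁ x0 s q.1 p.1 = 0 from Set.indicator_of_notMem u _]; simp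
    rw [e2] at this
    refine this.trans (le_of_eq ?_)
    ring
  refine (norm_sum_le _ _).trans ((Finset.sum_le_sum e).trans ?_)
  rw [← Finset.mul_sum]
  have key : (∑ q ∈ F, a q.1 * (b q.2 * c (q.1 + q.2))) ^ 2 ≤ 2 * N * (E2 f₁ * E2 f₂ * E2 f₃) := by
    have sa : ∑ i ∈ Finset.range M, a i ^ 2 ≤ E2 f₁ := by
      simp_rw [a, Nm_sq]; exact sum_pc h1 x0 hs M
    have sb : ∑ i ∈ Finset.range M, b i ^ 2 ≤ E2 f₂ := by
      simp_rw [b, Nm_sq]; exact sum_pc h2 y0 hs M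
    have sc : ∑ i ∈ Finset.range (2 * M), c i ^ 2 ≤ 2 * E2 f₃ := by
      simp_rw [c, Nm_sq]; exact sum_pc2 h3 (x0 + y0) hs (2 * M)
    rcases hcol with hcol | hcol
    · refine (fin_cs a b c M F hF N _ _ _ hN sa sb sc hcol).trans (le_of_eq ?_)
      ring
    · have e3 : ∑ q ∈ F, a q.1 * (b q.2 * c (q.1 + q.2)) =
          ∑ q ∈ F.map (Equiv.prodComm ℕ ℕ).toEmbedding, b q.1 * (a q.2 * c (q.1 + q.2)) := by
        rw [Finset.sum_map]
        apply Finset.sum_congr rfl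
        intro q _
        simp only [Equiv.toEmbedding_apply, Equiv.prodComm_apply, Prod.fst_swap, Prod.snd_swap]
        rw [add_comm q.2 q.1]; ring
      rw [e3]
      refine (fin_cs b a c M _ ?_ N _ _ _ hN sb sa sc ?_).trans (le_of_eq ?_)
      · intro q hq
        obtain ⟨r, hr, rfl⟩ := Finset.mem_map.1 hq
        have := Finset.mem_product.1 (hF hr)
        simpa [and_comm] using this
      · intro i
        refine le_trans (le_of_eq ?_) (hcol i)
        rw [Finset.filter_map, Finset.card_map]
        rfl
      · ring
  have : ∑ q ∈ F, a q.1 * (b q.2 * c (q.1 + q.2)) ≤ Real.sqrt (2 * N) * Nm f₁ * Nm f₂ * Nm f₃ := by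
    apply le_of_sqq
    · refine key.trans (le_of_eq ?_)
      simp only [mul_pow, Nm_sq]
      rw [Real.sq_sqrt (by positivity)]; ring
    · have := Nm_nonneg f₁
      have := Nm_nonneg f₂
      have := Nm_nonneg f₃
      positivity
  calc _ ≤ A * (Real.sqrt (2 * N) * Nm f₁ * Nm f₂ * Nm f₃) := by gcongr
    _ = _ := by ring

def AA (n : ℕ) : Prop := ∀ K : ℝ, 1 ≤ K → ∃ δ : ℝ, 0 < δ ∧ δ ≤ 1 ∧ ∃ C : ℝ, 0 ≤ C ∧
  ∀ S : ℝ × ℝ → ℝ, Sm S → ∀ x0 y0 r H : ℝ, 0 < r → 0 < H →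
  (∀ z : ℝ × ℝ, |z.1 - x0| ≤ r → |z.2 - y0| ≤ r → ∀ a b : ℕ, a + b ≤ n + 2 →
    |DD S a b z| * r ^ (a + b + 3) ≤ K * H) →
  (∃ a b : ℕ, a + b ≤ n ∧ H ≤ |DD S a b (x0, y0)| * r ^ (a + b + 3)) →
  ∀ f₁ f₂ f₃ : ℝ → ℂ, Nice f₁ → Nice f₂ → Nice f₃ →
  (∀ x, f₁ x ≠ 0 → x ∈ Set.Ico x0 (x0 + δ * r)) → (∀ x, f₂ x ≠ 0 → x ∈ Set.Ico y0 (y0 + δ * r)) →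
  ‖tri S f₁ f₂ f₃‖ ≤ C * Real.sqrt r * H ^ (-(1 / (2 * ((n : ℝ) + 3)))) * Nm f₁ * Nm f₂ * Nm f₃

theorem AA_zero : AA 0 := by
  intro K hK
  set κ : ℝ := (896 * Real.pi) ^ ((1:ℝ) / 3) with hκ
  have κ0 : 0 < κ := by positivity
  have κ3 : κ ^ 3 = 896 * Real.pi := by
    rw [hκ, ← Real.rpow_natCast, ← Real.rpow_mul (by positivity)]; norm_num
  have hK0 : 0 < K := by linarith
  refine ⟨1 / (16 * K), by positivity, ?_, Real.sqrt (3 * κ), by positivity, ?_⟩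
  · rw [div_le_one (by positivity)]; linarith
  intro S hS x0 y0 r H hr hH hU hl f₁ f₂ f₃ h1 h2 h3 s1 s2
  set δ := 1 / (16 * K) with hδ
  have hδ0 : 0 < δ := by positivity
  have hδK : δ * K = 1 / 16 := by rw [hδ]; field_simp
  have hδ1 : δ ≤ 1 / 16 := by nlinarith
  obtain ⟨a, b, hab, hl⟩ := hl
  have ha : a = 0 := by omega
  have hb : b = 0 := by omega
  subst ha hb
  have sr : 3 * (δ * r) ≤ r := by nlinarith
  have up : ∀ a b, a + b ≤ 2 → ∀ q : ℝ × ℝ, q.1 ∈ Set.Icc (x0 - r) (x0 + r) → q.2 ∈ Set.Icc (y0 - r) (y0 + r) →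
      |DD S a b q| ≤ K * H / r ^ (a + b + 3) := by
    intro a b hab q hq1 hq2
    rw [le_div_iff₀ (by positivity)]
    apply hU q _ _ a b (by omega)
    · rw [abs_le]; constructor <;> linarith [hq1.1, hq1.2]
    · rw [abs_le]; constructor <;> linarith [hq2.1, hq2.2]
  have e0 : DD S 0 0 = DOp S := rfl
  have e1 : pdy (DOp S) = DD S 0 1 := rfl
  have e2 : pdy (pdy (DOp S)) = DD S 0 2 := rfl
  set h := H ^ (-(1 / (2 * (((0:ℕ) : ℝ) + 3)))) with hh
  have h0 : 0 < h := by positivity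
  have h6 : h ^ 6 = 1 / H := by
    rw [hh, ← Real.rpow_natCast, ← Real.rpow_mul hH.le, one_div H, ← Real.rpow_neg_one]
    congr 1
    norm_num
  have main := box_est hS (x0 := x0) (y0 := y0) (s := δ * r) (μ := H / r ^ 3 / 2) (L := 1) (by positivity) (by positivity) (by norm_num)
    (by
      intro q hq1 hq2
      have q1 : q.1 ∈ Set.Icc (x0 - r) (x0 + r) := ⟨by linarith [hq1.1], by linarith [hq1.2]⟩
      have q2 : q.2 ∈ Set.Icc (y0 - r) (y0 + r) := ⟨by linarith [hq2.1], by linarith [hq2.2]⟩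
      refine ⟨?_, ?_, ?_⟩
      · have := mvt_rect (DD_sm hS 0 0) (z := q) (w := (x0, y0)) ⟨q1, q2⟩ ⟨⟨by simp [hr.le], by simp [hr.le]⟩, ⟨by simp [hr.le], by simp [hr.le]⟩⟩
          (by rw [pdx_DD]; exact up 1 0 (by norm_num)) (by rw [pdy_DD hS]; exact up 0 1 (by norm_num))
        norm_num at this hl
        have a1 : |q.1 - x0| ≤ δ * r := by rw [abs_le]; constructor <;> linarith [hq1.1, hq1.2]
        have a2 : |q.2 - y0| ≤ 3 * (δ * r) := by rw [abs_le]; constructor <;> linarith [hq2.1, hq2.2]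
        have a3 : K * H / r ^ 4 * |q.1 - x0| + K * H / r ^ 4 * |q.2 - y0| ≤ H / r ^ 3 / 2 := by
          calc _ ≤ K * H / r ^ 4 * (δ * r) + K * H / r ^ 4 * (3 * (δ * r)) := by gcongr
            _ = 4 * (δ * K) * (H / r ^ 3) := by field_simp; ring
            _ ≤ _ := by rw [hδK]; have : 0 ≤ H / r ^ 3 := by positivity
                        linarith
        have a4 : H / r ^ 3 ≤ |DD S 0 0 (x0, y0)| := by rw [div_le_iff₀ (by positivity)]; exact hl
        have a5 := abs_sub_abs_le_abs_sub (DD S 0 0 (x0, y0)) (DD S 0 0 q)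
        rw [abs_sub_comm] at a5
        rw [← e0]
        linarith
      · rw [e1]
        refine (up 0 1 (by norm_num) q q1 q2).trans ?_
        have : 1 * (H / r ^ 3 / 2) / (δ * r) = 8 * K * H / r ^ 4 := by rw [hδ]; field_simp; norm_num
        rw [this]
        gcongr
        linarith
      · rw [e2]
        refine (up 0 2 (by norm_num) q q1 q2).trans ?_
        have : 1 * (H / r ^ 3 / 2) / (δ * r) ^ 2 = 128 * K * K * H / r ^ 5 := by rw [hδ]; field_simp; norm_num
        rw [this]
        gcongr
        nlinarith)
    h1 h2 h3 s1 s2 (κ * r * h ^ 2) (by positivity) (by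
      have : (κ * r * h ^ 2) ^ 3 = κ ^ 3 * r ^ 3 * h ^ 6 := by ring
      rw [this, κ3, h6]; field_simp; norm_num)
  have n1 := Nm_nonneg f₁
  have n2 := Nm_nonneg f₂
  have n3 := Nm_nonneg f₃
  apply le_of_sqq _ (by positivity)
  refine main.trans (le_of_eq ?_)
  simp only [mul_pow, Nm_sq]
  rw [Real.sq_sqrt (by positivity), Real.sq_sqrt hr.le]; ring

def kids (T : Finset (ℕ × ℕ)) : Finset (ℕ × ℕ) :=
  (T ×ˢ (Finset.range 2 ×ˢ Finset.range 2)).image (fun t => (2 * t.1.1 + t.2.1, 2 * t.1.2 + t.2.2))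

theorem mem_kids {T : Finset (ℕ × ℕ)} {q : ℕ × ℕ} (h : q ∈ kids T) :
    ∃ t ∈ T, ∃ a b, a < 2 ∧ b < 2 ∧ q = (2 * t.1 + a, 2 * t.2 + b) := by
  obtain ⟨⟨t, ⟨a, b⟩⟩, ht, rfl⟩ := Finset.mem_image.1 h
  simp only [Finset.mem_product, Finset.mem_range] at ht
  exact ⟨t, ht.1, a, b, ht.2.1, ht.2.2, rfl⟩

theorem sum_kids (T : Finset (ℕ × ℕ)) (g : ℕ × ℕ → ℂ) :
    ∑ q ∈ kids T, g q = ∑ t ∈ T, ∑ c ∈ Finset.range 2 ×ˢ Finset.range 2, g (2 * t.1 + c.1, 2 * t.2 + c.2) := by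
  unfold kids
  rw [Finset.sum_image, Finset.sum_product]
  rintro ⟨⟨x, y⟩, ⟨a, b⟩⟩ h ⟨⟨x', y'⟩, ⟨a', b'⟩⟩ h' e
  simp only [Finset.coe_product, Set.mem_prod, Finset.mem_coe, Finset.mem_range, Prod.mk.injEq] at *
  omega

theorem kids_fst (T : Finset (ℕ × ℕ)) (i : ℕ) :
    ((kids T).filter (fun q => q.1 = i)).card ≤ 2 * (T.filter (fun q => q.1 = i / 2)).card := by
  have : (kids T).filter (fun q => q.1 = i) ⊆
      ((T.filter (fun q => q.1 = i / 2)) ×ˢ Finset.range 2).image (fun t => (i, 2 * t.1.2 + t.2)) := by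
    intro q hq
    rw [Finset.mem_filter] at hq
    obtain ⟨t, ht, a, b, ha, hb, rfl⟩ := mem_kids hq.1
    refine Finset.mem_image.2 ⟨(t, b), ?_, ?_⟩
    · simp only [Finset.mem_product, Finset.mem_filter, Finset.mem_range]
      exact ⟨⟨ht, by have := hq.2; omega⟩, hb⟩
    · simp only [Prod.mk.injEq, and_true]; exact hq.2.symm
  refine (Finset.card_le_card this).trans (Finset.card_image_le.trans ?_)
  rw [Finset.card_product, Finset.card_range, mul_comm]

theorem kids_snd (T : Finset (ℕ × ℕ)) (i : ℕ) :
    ((kids T).filter (fun q => q.2 = i)).card ≤ 2 * (T.filter (fun q => q.2 = i / 2)).card := by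
  have : (kids T).filter (fun q => q.2 = i) ⊆
      ((T.filter (fun q => q.2 = i / 2)) ×ˢ Finset.range 2).image (fun t => (2 * t.1.1 + t.2, i)) := by
    intro q hq
    rw [Finset.mem_filter] at hq
    obtain ⟨t, ht, a, b, ha, hb, rfl⟩ := mem_kids hq.1
    refine Finset.mem_image.2 ⟨(t, a), ?_, ?_⟩
    · simp only [Finset.mem_product, Finset.mem_filter, Finset.mem_range]
      exact ⟨⟨ht, by have := hq.2; omega⟩, ha⟩
    · simp only [Prod.mk.injEq, true_and]; exact hq.2.symm
  refine (Finset.card_le_card this).trans (Finset.card_image_le.trans ?_)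
  rw [Finset.card_product, Finset.card_range, mul_comm]

theorem pc_supp {f : ℝ → ℂ} {x0 s : ℝ} {i : ℕ} {x : ℝ} (h : pc f x0 s i x ≠ 0) :
    x ∈ Set.Ico (x0 + i * s) (x0 + i * s + s) := by
  have : x ∈ Set.Ico (x0 + i * s) (x0 + (i + 1) * s) := by
    by_contra h'
    exact h (Set.indicator_of_notMem h' _)
  convert this using 2
  ring

theorem scheme {S : ℝ × ℝ → ℝ} (hS : Measurable S) {f₁ f₂ f₃ : ℝ → ℂ} (h1 : Nice f₁) (h2 : Nice f₂)
    (h3 : Nice f₃) {x0 y0 s0 : ℝ} (hs0 : 0 < s0)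
    (s1 : ∀ x, f₁ x ≠ 0 → x ∈ Set.Ico x0 (x0 + s0)) (s2 : ∀ x, f₂ x ≠ 0 → x ∈ Set.Ico y0 (y0 + s0))
    (π : ℕ × ℕ → ℕ) (hπ : π = Prod.fst ∨ π = Prod.snd) (N : ℝ) (hN : 1 ≤ N)
    (U bad : ℕ → ℕ × ℕ → Prop) (X : ℕ → ℝ) (hX : ∀ j, 0 ≤ X j) (hU0 : U 0 (0, 0))
    (hgood : ∀ j q, q.1 < 2 ^ j → q.2 < 2 ^ j → U j q → ¬ bad j q → ∀ g : ℝ → ℂ, Nice g →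
      ‖tri S (pc f₁ x0 (s0 / 2 ^ j) q.1) (pc f₂ y0 (s0 / 2 ^ j) q.2) g‖ ≤
      X j * Nm (pc f₁ x0 (s0 / 2 ^ j) q.1) * Nm (pc f₂ y0 (s0 / 2 ^ j) q.2) * Nm g)
    (hbad : ∀ j q, q.1 < 2 ^ j → q.2 < 2 ^ j → U j q → bad j q → ∀ a b, a < 2 → b < 2 →
      U (j + 1) (2 * q.1 + a, 2 * q.2 + b))
    (hcnt : ∀ j, ∀ T : Finset (ℕ × ℕ), (∀ q ∈ T, q.1 < 2 ^ j ∧ q.2 < 2 ^ j ∧ bad j q) →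
      ∀ i, ((T.filter (fun q => π q = i)).card : ℝ) ≤ N) (J : ℕ) :
    ‖tri S f₁ f₂ f₃‖ ≤ (∑ l ∈ Finset.range J, X l + Real.sqrt (s0 / 2 ^ J)) * Real.sqrt (4 * N) *
      Nm f₁ * Nm f₂ * Nm f₃ := by
  classical
  have n1 := Nm_nonneg f₁
  have n2 := Nm_nonneg f₂
  have n3 := Nm_nonneg f₃
  have orthπ : ∀ (j : ℕ) (F : Finset (ℕ × ℕ)), F ⊆ Finset.range (2 ^ j) ×ˢ Finset.range (2 ^ j) →
      (∀ i, ((F.filter (fun q => π q = i)).card : ℝ) ≤ 2 * N) → ∀ A, 0 ≤ A →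
      (∀ q ∈ F, ∀ g : ℝ → ℂ, Nice g → ‖tri S (pc f₁ x0 (s0 / 2 ^ j) q.1) (pc f₂ y0 (s0 / 2 ^ j) q.2) g‖ ≤
      A * Nm (pc f₁ x0 (s0 / 2 ^ j) q.1) * Nm (pc f₂ y0 (s0 / 2 ^ j) q.2) * Nm g) →
      ‖∑ q ∈ F, tri S (pc f₁ x0 (s0 / 2 ^ j) q.1) (pc f₂ y0 (s0 / 2 ^ j) q.2) f₃‖ ≤
        A * Real.sqrt (4 * N) * Nm f₁ * Nm f₂ * Nm f₃ := by
    intro j F hF hc A hA hest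
    have := orth h1 h2 h3 x0 y0 (s := s0 / 2 ^ j) (by positivity) (2 ^ j) F hF (2 * N) A (by linarith) hA
      (by rcases hπ with rfl | rfl
          · exact Or.inl hc
          · exact Or.inr hc) hest
    rwa [show 2 * (2 * N) = 4 * N by ring] at this
  have main : ∀ J : ℕ, ∃ F : Finset (ℕ × ℕ), F ⊆ Finset.range (2 ^ J) ×ˢ Finset.range (2 ^ J) ∧
      (∀ q ∈ F, U J q) ∧ (∀ i, ((F.filter (fun q => π q = i)).card : ℝ) ≤ 2 * N) ∧
      ‖tri S f₁ f₂ f₃ - ∑ q ∈ F, tri S (pc f₁ x0 (s0 / 2 ^ J) q.1) (pc f₂ y0 (s0 / 2 ^ J) q.2) f₃‖ ≤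
        (∑ l ∈ Finset.range J, X l) * Real.sqrt (4 * N) * Nm f₁ * Nm f₂ * Nm f₃ := by
    intro J
    induction J with
    | zero =>
      refine ⟨{(0, 0)}, by simp, by simpa using hU0, ?_, ?_⟩
      · intro i
        have : ((({(0, 0)} : Finset (ℕ × ℕ)).filter (fun q => π q = i)).card : ℝ) ≤ 1 := by
          exact_mod_cast (Finset.card_filter_le _ _).trans (by simp)
        linarith
      · have e : ∀ (f : ℝ → ℂ) (z : ℝ), (∀ x, f x ≠ 0 → x ∈ Set.Ico z (z + s0)) → pc f z (s0 / 2 ^ 0) 0 = f := by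
          intro f z hf
          unfold pc
          rw [Set.indicator_eq_self]
          intro x hx
          simpa using hf x hx
        rw [Finset.sum_singleton, e f₁ x0 s1, e f₂ y0 s2]; simp
    | succ J ih =>
      obtain ⟨F, hF, hFU, hFc, hFe⟩ := ih
      set bd := F.filter (bad J) with hbd
      set gd := F.filter (fun q => ¬ bad J q) with hgd
      have hFm : ∀ q ∈ F, q.1 < 2 ^ J ∧ q.2 < 2 ^ J := by
        intro q hq
        simpa using Finset.mem_product.1 (hF hq)
      have hbc := hcnt J bd (fun q hq => ⟨(hFm q (Finset.mem_filter.1 hq).1).1, (hFm q (Finset.mem_filter.1 hq).1).2, (Finset.mem_filter.1 hq).2⟩)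
      have hg := orthπ J gd ((Finset.filter_subset _ _).trans hF)
        (fun i => le_trans (by
          exact_mod_cast Finset.card_le_card (Finset.filter_subset_filter _ (Finset.filter_subset _ _))) (hFc i))
        (X J) (hX J)
        (fun q hq => hgood J q (hFm q (Finset.mem_filter.1 hq).1).1 (hFm q (Finset.mem_filter.1 hq).1).2
          (hFU q (Finset.mem_filter.1 hq).1) (Finset.mem_filter.1 hq).2)
      refine ⟨kids bd, ?_, ?_, ?_, ?_⟩
      · intro q hq
        obtain ⟨t, ht, a, b, ha, hb, rfl⟩ := mem_kids hq
        have := hFm t (Finset.mem_filter.1 ht).1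
        simp only [Finset.mem_product, Finset.mem_range, pow_succ]
        omega
      · intro q hq
        obtain ⟨t, ht, a, b, ha, hb, rfl⟩ := mem_kids hq
        have ht' := Finset.mem_filter.1 ht
        exact hbad J t (hFm t ht'.1).1 (hFm t ht'.1).2 (hFU t ht'.1) ht'.2 a b ha hb
      · intro i
        have : ((kids bd).filter (fun q => π q = i)).card ≤ 2 * (bd.filter (fun q => π q = i / 2)).card := by
          rcases hπ with rfl | rfl
          · exact kids_fst bd i
          · exact kids_snd bd i
        have h' : (((kids bd).filter (fun q => π q = i)).card : ℝ) ≤ 2 * ((bd.filter (fun q => π q = i / 2)).card : ℝ) := by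
          exact_mod_cast this
        linarith [hbc (i / 2)]
      · have e : ∑ q ∈ kids bd, tri S (pc f₁ x0 (s0 / 2 ^ (J + 1)) q.1) (pc f₂ y0 (s0 / 2 ^ (J + 1)) q.2) f₃ =
            ∑ q ∈ bd, tri S (pc f₁ x0 (s0 / 2 ^ J) q.1) (pc f₂ y0 (s0 / 2 ^ J) q.2) f₃ := by
          rw [sum_kids]
          apply Finset.sum_congr rfl
          intro t _
          rw [tri_split hS h1 h2 h3 x0 y0 (by positivity)]
          simp only
          rw [show s0 / 2 ^ (J + 1) = s0 / 2 ^ J / 2 by rw [pow_succ]; field_simp]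
        rw [e]
        have e2 := Finset.sum_filter_add_sum_filter_not F (bad J)
          (fun q => tri S (pc f₁ x0 (s0 / 2 ^ J) q.1) (pc f₂ y0 (s0 / 2 ^ J) q.2) f₃)
        rw [← e2] at hFe
        rw [Finset.sum_range_succ]
        set Bs := ∑ q ∈ F.filter (bad J), tri S (pc f₁ x0 (s0 / 2 ^ J) q.1) (pc f₂ y0 (s0 / 2 ^ J) q.2) f₃
        set Gs := ∑ q ∈ F.filter (fun q => ¬ bad J q), tri S (pc f₁ x0 (s0 / 2 ^ J) q.1) (pc f₂ y0 (s0 / 2 ^ J) q.2) f₃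
        calc ‖tri S f₁ f₂ f₃ - Bs‖ = ‖(tri S f₁ f₂ f₃ - (Bs + Gs)) + Gs‖ := by congr 1; ring
          _ ≤ _ := norm_add_le _ _
          _ ≤ _ := add_le_add hFe hg
          _ = _ := by ring
  obtain ⟨F, hF, hFU, hFc, hFe⟩ := main J
  have ht := orthπ J F hF hFc (Real.sqrt (s0 / 2 ^ J)) (Real.sqrt_nonneg _) (by
    intro q hq g hg
    exact tri_triv hS (h1.pc _ _ _) (h2.pc _ _ _) hg (x0 := x0 + q.1 * (s0 / 2 ^ J)) (by positivity)
      (fun x hx => pc_supp hx))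
  set Bs := ∑ q ∈ F, tri S (pc f₁ x0 (s0 / 2 ^ J) q.1) (pc f₂ y0 (s0 / 2 ^ J) q.2) f₃
  calc ‖tri S f₁ f₂ f₃‖ = ‖(tri S f₁ f₂ f₃ - Bs) + Bs‖ := by congr 1; ring
    _ ≤ _ := norm_add_le _ _
    _ ≤ _ := add_le_add hFe ht
    _ = _ := by ring

theorem desc {S : ℝ × ℝ → ℝ} (hS : Sm S) {m : ℕ} {K B ρ qx qy : ℝ} (hK : 1 ≤ K) (hB : 0 < B) (hρ : 0 < ρ)
    (top : ∀ z : ℝ × ℝ, |z.1 - qx| ≤ ρ → |z.2 - qy| ≤ ρ → ∀ a b, a + b = m → |DD S a b z| ≤ K * B)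
    (bad : ∀ a b d, a + b + (d + 1) = m → |DD S a b (qx, qy)| < B * ρ ^ (d + 1)) (d : ℕ) :
    ∀ a b, a + b + d = m → ∀ z : ℝ × ℝ, |z.1 - qx| ≤ ρ → |z.2 - qy| ≤ ρ → |DD S a b z| ≤ 3 ^ d * K * B * ρ ^ d := by
  induction d with
  | zero =>
    intro a b hab z h1 h2
    simpa using top z h1 h2 a b hab
  | succ d ih =>
    intro a b hab z h1 h2
    have hm : ∀ {u c : ℝ}, u ∈ Set.Icc (c - ρ) (c + ρ) ↔ |u - c| ≤ ρ := by
      intro u c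
      rw [abs_le, Set.mem_Icc]; constructor <;> rintro ⟨h, h'⟩ <;> constructor <;> linarith
    have := mvt_rect (DD_sm hS a b) (z := z) (w := (qx, qy)) (a := qx - ρ) (a' := qx + ρ) (b := qy - ρ) (b' := qy + ρ)
      ⟨hm.2 h1, hm.2 h2⟩ ⟨hm.2 (by simp [hρ.le]), hm.2 (by simp [hρ.le])⟩
      (by rw [pdx_DD]; intro q hq1 hq2; exact ih (a + 1) b (by omega) q (hm.1 hq1) (hm.1 hq2))
      (by rw [pdy_DD hS]; intro q hq1 hq2; exact ih a (b + 1) (by omega) q (hm.1 hq1) (hm.1 hq2))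
    have b0 := bad a b d hab
    have b1 := abs_sub_abs_le_abs_sub (DD S a b z) (DD S a b (qx, qy))
    simp only at this
    have b2 : 3 ^ d * K * B * ρ ^ d * |z.1 - qx| + 3 ^ d * K * B * ρ ^ d * |z.2 - qy| ≤
      3 ^ d * K * B * ρ ^ d * ρ + 3 ^ d * K * B * ρ ^ d * ρ := by gcongr
    have b3 : B * ρ ^ (d + 1) ≤ 3 ^ d * K * B * ρ ^ (d + 1) := by
      have : (1:ℝ) ≤ 3 ^ d * K := by
        have : (1:ℝ) ≤ 3 ^ d := one_le_pow₀ (by norm_num)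
        nlinarith
      have h0 : 0 < B * ρ ^ (d + 1) := by positivity
      nlinarith
    calc |DD S a b z| ≤ B * ρ ^ (d + 1) + (3 ^ d * K * B * ρ ^ d * ρ + 3 ^ d * K * B * ρ ^ d * ρ) := by linarith
      _ ≤ 3 ^ d * K * B * ρ ^ (d + 1) + (3 ^ d * K * B * ρ ^ d * ρ + 3 ^ d * K * B * ρ ^ d * ρ) := by linarith
      _ = _ := by ring

theorem card_diff (T : Finset ℕ) (R : ℝ) (hR : 0 ≤ R) (h : ∀ k ∈ T, ∀ k' ∈ T, (k' : ℝ) - k ≤ R) :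
    (T.card : ℝ) ≤ R + 1 := by
  rcases T.eq_empty_or_nonempty with rfl | hT
  · simp; linarith
  · set k0 := T.min' hT
    have sub : T ⊆ Finset.Icc k0 (k0 + ⌊R⌋₊) := by
      intro k hk
      rw [Finset.mem_Icc]
      refine ⟨T.min'_le k hk, ?_⟩
      have h1 := h k0 (T.min'_mem hT) k hk
      have h2 : k0 ≤ k := T.min'_le k hk
      have h3 : k - k0 ≤ ⌊R⌋₊ := Nat.le_floor (by rw [Nat.cast_sub h2]; exact h1)
      omega
    have := Finset.card_le_card sub
    rw [Nat.card_Icc] at this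
    have h4 : (T.card : ℝ) ≤ ((k0 + ⌊R⌋₊ + 1 - k0 : ℕ) : ℝ) := by exact_mod_cast this
    have h5 : k0 + ⌊R⌋₊ + 1 - k0 = ⌊R⌋₊ + 1 := by omega
    rw [h5] at h4
    push_cast at h4
    linarith [Nat.floor_le hR]

theorem summ (n : ℕ) (C' r0 s0 G : ℝ) (hC : 0 ≤ C') (hr : 0 < r0) (hs : 0 < s0) (hG : 0 < G) :
    ∃ J : ℕ, ∑ l ∈ Finset.range J, C' * Real.sqrt (r0 / 2 ^ l) * (G / (2 ^ l) ^ (n + 4)) ^ (-(1 / (2 * ((n : ℝ) + 3))))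
      + Real.sqrt (s0 / 2 ^ J) ≤
      (C' / ((2:ℝ) ^ (1 / (2 * ((n : ℝ) + 3))) - 1) * Real.sqrt r0 + Real.sqrt 2 * Real.sqrt s0) *
        G ^ (-(1 / (2 * ((n : ℝ) + 4)))) := by
  set θ : ℝ := 1 / (2 * ((n : ℝ) + 3)) with hθ
  set θ' : ℝ := 1 / (2 * ((n : ℝ) + 4)) with hθ'
  have θ0 : 0 < θ := by positivity
  have θ0' : 0 < θ' := by positivity
  set ω : ℝ := (2:ℝ) ^ θ with hω
  have ω1 : 1 < ω := Real.one_lt_rpow (by norm_num) θ0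
  rcases lt_or_ge G 1 with hG1 | hG1
  · refine ⟨0, ?_⟩
    simp only [Finset.range_zero, Finset.sum_empty, zero_add, pow_zero, div_one]
    have a1 : 1 ≤ G ^ (-θ') := Real.one_le_rpow_of_pos_of_le_one_of_nonpos hG hG1.le (by linarith)
    have a2 : 1 ≤ Real.sqrt 2 := Real.one_le_sqrt.2 (by norm_num)
    have a3 : 0 ≤ C' / (ω - 1) * Real.sqrt r0 := by
      have : 0 < ω - 1 := by linarith
      positivity
    have a4 := Real.sqrt_nonneg s0
    calc Real.sqrt s0 = (0 + 1 * Real.sqrt s0) * 1 := by ring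
      _ ≤ _ := by gcongr
  · obtain ⟨J, hJ1, hJ2⟩ := exists_nat_pow_near (x := G ^ (1 / ((n:ℝ) + 4))) (y := 2) (Real.one_le_rpow hG1 (by positivity)) (by norm_num)
    refine ⟨J, ?_⟩
    have term : ∀ l : ℕ, C' * Real.sqrt (r0 / 2 ^ l) * (G / (2 ^ l) ^ (n + 4)) ^ (-θ) = C' * Real.sqrt r0 * G ^ (-θ) * ω ^ l := by
      intro l
      set t : ℝ := 2 ^ l with ht
      have t0 : 0 < t := by positivity
      have e1 : Real.sqrt (r0 / t) = Real.sqrt r0 * t ^ (-(1/2) : ℝ) := by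
        rw [Real.sqrt_div hr.le, Real.rpow_neg t0.le, ← Real.sqrt_eq_rpow]; rfl
      have e2 : (G / t ^ (n + 4)) ^ (-θ) = G ^ (-θ) * t ^ (((n:ℝ) + 4) * θ) := by
        rw [Real.div_rpow hG.le (by positivity), Real.rpow_neg (x := t ^ (n+4)) (by positivity), div_inv_eq_mul, ← Real.rpow_natCast t, ← Real.rpow_mul t0.le]
        push_cast; rfl
      have e3 : ω ^ l = t ^ (-(1/2) : ℝ) * t ^ (((n:ℝ) + 4) * θ) := by
        rw [← Real.rpow_add t0, ht, hω, ← Real.rpow_natCast, ← Real.rpow_natCast, ← Real.rpow_mul (by norm_num), ← Real.rpow_mul (by norm_num)]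
        congr 1
        rw [hθ]; field_simp; ring
      rw [e1, e2, e3]; ring
    simp_rw [term]
    rw [← Finset.mul_sum, geom_sum_eq ω1.ne']
    have ω0 : 0 < ω - 1 := by linarith
    have k1 : ω ^ J ≤ G ^ (θ / ((n:ℝ) + 4)) := by
      calc ω ^ J = ((2:ℝ) ^ J) ^ θ := by
            rw [hω, ← Real.rpow_natCast, ← Real.rpow_natCast, ← Real.rpow_mul (by norm_num), ← Real.rpow_mul (by norm_num), mul_comm]
        _ ≤ (G ^ (1 / ((n:ℝ) + 4))) ^ θ := by gcongr
        _ = _ := by rw [← Real.rpow_mul hG.le]; congr 1; ring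
    have k2 : G ^ (-θ) * G ^ (θ / ((n:ℝ) + 4)) = G ^ (-θ') := by
      rw [← Real.rpow_add hG]; congr 1; rw [hθ, hθ']; field_simp; ring
    have k3 : Real.sqrt (s0 / 2 ^ J) ≤ Real.sqrt 2 * Real.sqrt s0 * G ^ (-θ') := by
      have q1 : G ^ (-θ') = (Real.sqrt (G ^ (1 / ((n:ℝ) + 4))))⁻¹ := by
        rw [Real.sqrt_eq_rpow, ← Real.rpow_mul hG.le, ← Real.rpow_neg hG.le]
        congr 1; rw [hθ']; field_simp
      rw [q1, ← Real.sqrt_mul (by norm_num), ← Real.sqrt_inv, ← Real.sqrt_mul (by positivity)]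
      apply Real.sqrt_le_sqrt
      have : 0 < G ^ (1 / ((n:ℝ) + 4)) := by positivity
      rw [← div_eq_mul_inv, div_le_div_iff₀ (by positivity) this]
      rw [pow_succ] at hJ2
      nlinarith
    have k4 : C' * Real.sqrt r0 * G ^ (-θ) * ((ω ^ J - 1) / (ω - 1)) ≤ C' / (ω - 1) * Real.sqrt r0 * G ^ (-θ') := by
      rw [← k2]
      calc _ ≤ C' * Real.sqrt r0 * G ^ (-θ) * (G ^ (θ / ((n:ℝ) + 4)) / (ω - 1)) := by
            gcongr; linarith
        _ = _ := by ring
    linarith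

theorem pos_in {s0 : ℝ} (hs : 0 < s0) {i j : ℕ} (h : i < 2 ^ j) : 0 ≤ (i:ℝ) * (s0 / 2 ^ j) ∧ (i:ℝ) * (s0 / 2 ^ j) ≤ s0 := by
  refine ⟨by positivity, ?_⟩
  have : (i:ℝ) ≤ 2 ^ j := by exact_mod_cast h.le
  calc (i:ℝ) * (s0 / 2 ^ j) ≤ 2 ^ j * (s0 / 2 ^ j) := by gcongr
    _ = s0 := by field_simp

theorem sep {f f' : ℝ → ℝ} (hf : ∀ t, HasDerivAt f (f' t) t) {y0 s0 B e ρ σ : ℝ} (hB : 0 < B) (he : 0 < e) (hρ : 0 < ρ)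
    (hσ : σ = e * ρ) {k k' : ℕ} (hk : 0 ≤ (k:ℝ) * σ ∧ (k:ℝ) * σ ≤ s0) (hk' : 0 ≤ (k':ℝ) * σ ∧ (k':ℝ) * σ ≤ s0)
    (low : ∀ t ∈ Set.Icc y0 (y0 + s0), B / 2 ≤ |f' t|)
    (b1 : |f (y0 + k * σ)| < B * ρ ^ (0 + 1)) (b2 : |f (y0 + k' * σ)| < B * ρ ^ (0 + 1)) : (k':ℝ) - k ≤ 4 / e := by
  obtain ⟨η, hη, h⟩ := mvt1 hf (y0 + k * σ) (y0 + k' * σ)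
  have hη' : η ∈ Set.Icc y0 (y0 + s0) :=
    Set.uIcc_subset_Icc ⟨by linarith, by linarith⟩ ⟨by linarith, by linarith⟩ hη
  have l := low η hη'
  have h2 := abs_sub (f (y0 + k' * σ)) (f (y0 + k * σ))
  rw [h, abs_mul] at h2
  have h3 : y0 + k' * σ - (y0 + k * σ) = ((k':ℝ) - k) * (e * ρ) := by rw [hσ]; ring
  rw [h3, abs_mul, abs_of_pos (by positivity : 0 < e * ρ)] at h2
  simp only [zero_add, pow_one] at b1 b2
  have h4 : B / 2 * (|(k':ℝ) - k| * (e * ρ)) ≤ 2 * B * ρ := by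
    calc _ ≤ |f' η| * (|(k':ℝ) - k| * (e * ρ)) := by gcongr
      _ ≤ _ := by linarith
  have h5 : |(k':ℝ) - k| * e ≤ 4 := by
    have : 0 < B * ρ := by positivity
    by_contra hc
    push Not at hc
    nlinarith
  rw [le_div_iff₀ he]
  exact (mul_le_mul_of_nonneg_right (le_abs_self _) he.le).trans h5

theorem step_core (n : ℕ) {K e C' : ℝ} (hK : 1 ≤ K) (he : 0 < e) (he1 : e ≤ 1) (heK : e * K ≤ 1) (hC : 0 ≤ C')
    {S : ℝ × ℝ → ℝ} (hS : Sm S)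
    (hA : ∀ x0 y0 r H : ℝ, 0 < r → 0 < H →
      (∀ z : ℝ × ℝ, |z.1 - x0| ≤ r → |z.2 - y0| ≤ r → ∀ a b : ℕ, a + b ≤ n + 2 →
        |DD S a b z| * r ^ (a + b + 3) ≤ (6 ^ (n + 1) * K) * H) →
      (∃ a b : ℕ, a + b ≤ n ∧ H ≤ |DD S a b (x0, y0)| * r ^ (a + b + 3)) →
      ∀ f₁ f₂ f₃ : ℝ → ℂ, Nice f₁ → Nice f₂ → Nice f₃ →
      (∀ x, f₁ x ≠ 0 → x ∈ Set.Ico x0 (x0 + e * r)) → (∀ x, f₂ x ≠ 0 → x ∈ Set.Ico y0 (y0 + e * r)) →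
      ‖tri S f₁ f₂ f₃‖ ≤ C' * Real.sqrt r * H ^ (-(1 / (2 * ((n : ℝ) + 3)))) * Nm f₁ * Nm f₂ * Nm f₃)
    {x0 y0 r0 B : ℝ} (hr : 0 < r0) (hB : 0 < B)
    (hU : ∀ z : ℝ × ℝ, |z.1 - x0| ≤ 4 * r0 → |z.2 - y0| ≤ 4 * r0 → ∀ a b : ℕ, a + b ≤ n + 2 →
      |DD S a b z| * (4 * r0) ^ (a + b + 3) ≤ K * (B * (4 * r0) ^ (n + 4)))
    {ga gb : ℕ} (hg : ga + gb = n + 1) (hl : B ≤ |DD S ga gb (x0, y0)|)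
    {f₁ f₂ f₃ : ℝ → ℂ} (h1 : Nice f₁) (h2 : Nice f₂) (h3 : Nice f₃)
    (s1 : ∀ x, f₁ x ≠ 0 → x ∈ Set.Ico x0 (x0 + e * r0)) (s2 : ∀ x, f₂ x ≠ 0 → x ∈ Set.Ico y0 (y0 + e * r0)) (J : ℕ) :
    ‖tri S f₁ f₂ f₃‖ ≤ (∑ l ∈ Finset.range J, C' * Real.sqrt (r0 / 2 ^ l) * ((B * r0 ^ (n + 4)) / (2 ^ l) ^ (n + 4)) ^ (-(1 / (2 * ((n : ℝ) + 3))))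
      + Real.sqrt ((e * r0) / 2 ^ J)) * Real.sqrt (4 * (4 / e + 1)) *
      Nm f₁ * Nm f₂ * Nm f₃ := by
  set s0 := e * r0 with hs0
  have hs : 0 < s0 := by positivity
  have hsr : s0 ≤ r0 := by nlinarith
  have hρ : ∀ j : ℕ, 0 < r0 / 2 ^ j := fun j => by positivity
  have hρ1 : ∀ j : ℕ, r0 / 2 ^ j ≤ r0 := fun j => div_le_self hr.le (one_le_pow₀ (by norm_num))
  have hσ : ∀ j : ℕ, s0 / 2 ^ j = e * (r0 / 2 ^ j) := fun j => by rw [hs0]; ring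
  have top1 : ∀ z : ℝ × ℝ, |z.1 - x0| ≤ 4 * r0 → |z.2 - y0| ≤ 4 * r0 → ∀ a b : ℕ, a + b = n + 1 → |DD S a b z| ≤ K * B := by
    intro z hz1 hz2 a b hab
    have := hU z hz1 hz2 a b (by omega)
    rw [hab, ← mul_assoc] at this
    exact le_of_mul_le_mul_right this (by positivity)
  have top2 : ∀ z : ℝ × ℝ, |z.1 - x0| ≤ 4 * r0 → |z.2 - y0| ≤ 4 * r0 → ∀ a b : ℕ, a + b = n + 2 → |DD S a b z| * (4 * r0) ≤ K * B := by
    intro z hz1 hz2 a b hab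
    have := hU z hz1 hz2 a b (by omega)
    rw [hab, ← mul_assoc, show n + 2 + 3 = (n + 4) + 1 by ring, pow_succ', ← mul_assoc] at this
    exact le_of_mul_le_mul_right this (by positivity)
  have low : ∀ z : ℝ × ℝ, z.1 ∈ Set.Icc x0 (x0 + s0) → z.2 ∈ Set.Icc y0 (y0 + s0) → B / 2 ≤ |DD S ga gb z| := by
    intro z hz1 hz2
    have c : ∀ {u c : ℝ}, u ∈ Set.Icc c (c + s0) → |u - c| ≤ 4 * r0 := by
      intro u c hu; rw [abs_le]; constructor <;> linarith [hu.1, hu.2]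
    have m := mvt_rect (DD_sm hS ga gb) (z := z) (w := (x0, y0)) ⟨hz1, hz2⟩
      ⟨⟨le_rfl, by simp [hs.le]⟩, ⟨le_rfl, by simp [hs.le]⟩⟩ (M := K * B / (4 * r0)) (N := K * B / (4 * r0))
      (by rw [pdx_DD]; intro q q1 q2; rw [le_div_iff₀ (by positivity)]; exact top2 q (c q1) (c q2) _ _ (by omega))
      (by rw [pdy_DD hS]; intro q q1 q2; rw [le_div_iff₀ (by positivity)]; exact top2 q (c q1) (c q2) _ _ (by omega))
    have a1 : |z.1 - x0| ≤ s0 := by rw [abs_le]; constructor <;> linarith [hz1.1, hz1.2]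
    have a2 : |z.2 - y0| ≤ s0 := by rw [abs_le]; constructor <;> linarith [hz2.1, hz2.2]
    have a3 : K * B / (4 * r0) * |z.1 - x0| + K * B / (4 * r0) * |z.2 - y0| ≤ B / 2 := by
      calc _ ≤ K * B / (4 * r0) * s0 + K * B / (4 * r0) * s0 := by gcongr
        _ = (e * K) * (B / 2) := by rw [hs0]; field_simp; norm_num
        _ ≤ 1 * (B / 2) := by gcongr
        _ = _ := one_mul _
    have a5 := abs_sub_abs_le_abs_sub (DD S ga gb (x0, y0)) (DD S ga gb z)
    rw [abs_sub_comm] at a5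
    simp only at m
    linarith
  -- the predicates
  set U : ℕ → ℕ × ℕ → Prop := fun j q => ∀ z : ℝ × ℝ, |z.1 - (x0 + q.1 * (s0 / 2 ^ j))| ≤ r0 / 2 ^ j →
    |z.2 - (y0 + q.2 * (s0 / 2 ^ j))| ≤ r0 / 2 ^ j → ∀ a b : ℕ, a + b ≤ n + 2 →
        |DD S a b z| * (r0 / 2 ^ j) ^ (a + b + 3) ≤ (6 ^ (n + 1) * K) * (B * (r0 / 2 ^ j) ^ (n + 4)) with hUdef
  set bad : ℕ → ℕ × ℕ → Prop := fun j q => ∀ a b d : ℕ, a + b + (d + 1) = n + 1 →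
    |DD S a b (x0 + q.1 * (s0 / 2 ^ j), y0 + q.2 * (s0 / 2 ^ j))| < B * (r0 / 2 ^ j) ^ (d + 1) with hbaddef
  have h6 : K ≤ 6 ^ (n + 1) * K := by
    have : (1:ℝ) ≤ 6 ^ (n + 1) := one_le_pow₀ (by norm_num)
    nlinarith
  have cnt : ∃ π : ℕ × ℕ → ℕ, (π = Prod.fst ∨ π = Prod.snd) ∧ ∀ j, ∀ T : Finset (ℕ × ℕ), (∀ q ∈ T, q.1 < 2 ^ j ∧ q.2 < 2 ^ j ∧ bad j q) →
      ∀ i, ((T.filter (fun q => π q = i)).card : ℝ) ≤ 4 / e + 1 := by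
    rcases Nat.eq_zero_or_pos gb with hgb | hgb
    · refine ⟨Prod.snd, Or.inr rfl, ?_⟩
      intro j T hT i
      rw [← Finset.card_image_of_injOn (f := Prod.fst)]
      swap
      · rintro ⟨a, b⟩ hq ⟨a', b'⟩ hq' h
        simp only [Finset.coe_filter, Set.mem_setOf_eq] at hq hq' h
        rw [h, hq.2, hq'.2]
      apply card_diff _ _ (by positivity)
      intro k hk k' hk'
      obtain ⟨q, hq, rfl⟩ := Finset.mem_image.1 hk
      obtain ⟨q', hq', rfl⟩ := Finset.mem_image.1 hk'
      rw [Finset.mem_filter] at hq hq'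
      obtain ⟨t1, t2, t3⟩ := hT q hq.1
      obtain ⟨t1', t2', t3'⟩ := hT q' hq'.1
      have p2 := pos_in hs t2
      obtain ⟨ga', rfl⟩ : ∃ ga', ga = ga' + 1 := ⟨ga - 1, by omega⟩
      refine sep (fun t => (DD_sm hS ga' gb).hx t (y0 + q.2 * (s0 / 2 ^ j))) hB he (hρ j) (hσ j) (pos_in hs t1) (pos_in hs t1')
        (fun t ht => ?_) (t3 ga' gb 0 (by omega)) ?_
      · rw [pdx_DD]; exact low _ ht ⟨by simp only; linarith, by simp only; linarith⟩
      · have := t3' ga' gb 0 (by omega)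
        rwa [hq'.2, ← hq.2] at this
    · refine ⟨Prod.fst, Or.inl rfl, ?_⟩
      intro j T hT i
      rw [← Finset.card_image_of_injOn (f := Prod.snd)]
      swap
      · rintro ⟨a, b⟩ hq ⟨a', b'⟩ hq' h
        simp only [Finset.coe_filter, Set.mem_setOf_eq] at hq hq' h
        rw [h, hq.2, hq'.2]
      apply card_diff _ _ (by positivity)
      intro k hk k' hk'
      obtain ⟨q, hq, rfl⟩ := Finset.mem_image.1 hk
      obtain ⟨q', hq', rfl⟩ := Finset.mem_image.1 hk'
      rw [Finset.mem_filter] at hq hq'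
      obtain ⟨t1, t2, t3⟩ := hT q hq.1
      obtain ⟨t1', t2', t3'⟩ := hT q' hq'.1
      have p2 := pos_in hs t1
      obtain ⟨gb', rfl⟩ : ∃ gb', gb = gb' + 1 := ⟨gb - 1, by omega⟩
      refine sep (fun t => (DD_sm hS ga gb').hy (x0 + q.1 * (s0 / 2 ^ j)) t) hB he (hρ j) (hσ j) (pos_in hs t2) (pos_in hs t2')
        (fun t ht => ?_) (t3 ga gb' 0 (by omega)) ?_
      · rw [pdy_DD hS]; exact low _ ⟨by simp only; linarith, by simp only; linarith⟩ ht
      · have := t3' ga gb' 0 (by omega)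
        rwa [hq'.2, ← hq.2] at this
  obtain ⟨π, hπ, hcnt⟩ := cnt
  refine scheme hS.cont.measurable h1 h2 h3 hs s1 s2 π hπ (4 / e + 1) ?_ U bad _ ?_ ?_ ?_ ?_ hcnt J
  · have : 0 < 4 / e := by positivity
    linarith
  · intro j; positivity
  · intro z hz1 hz2 a b hab
    simp only [Nat.cast_zero, zero_mul, add_zero, pow_zero, div_one] at hz1 hz2 ⊢
    have := hU z (by linarith) (by linarith) a b hab
    rw [mul_pow, mul_pow] at this
    have e1 : (4:ℝ) ^ (a + b + 3) = 4 ^ (a + b) * 4 ^ 3 := pow_add _ _ _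
    have e2 : (4:ℝ) ^ (n + 4) = 4 ^ (n + 1) * 4 ^ 3 := by rw [← pow_add]
    rw [e1, e2] at this
    have e3 : |DD S a b z| * r0 ^ (a + b + 3) * 4 ^ (a + b) ≤ 4 ^ (n + 1) * K * (B * r0 ^ (n + 4)) := by linarith
    have e4 : (1:ℝ) ≤ 4 ^ (a + b) := one_le_pow₀ (by norm_num)
    calc |DD S a b z| * r0 ^ (a + b + 3) = |DD S a b z| * r0 ^ (a + b + 3) * 1 := by ring
      _ ≤ |DD S a b z| * r0 ^ (a + b + 3) * 4 ^ (a + b) := by gcongr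
      _ ≤ _ := e3
      _ ≤ _ := by gcongr; norm_num
  · intro j q hq1 hq2 hUq hnb g hg'
    simp only [hbaddef] at hnb
    push Not at hnb
    obtain ⟨a, b, d, habd, hlow⟩ := hnb
    have := hA (x0 + q.1 * (s0 / 2 ^ j)) (y0 + q.2 * (s0 / 2 ^ j)) (r0 / 2 ^ j) (B * (r0 / 2 ^ j) ^ (n + 4)) (hρ j)
      (by have := hρ j; positivity) hUq ⟨a, b, by omega, by
        rw [show n + 4 = (d + 1) + (a + b + 3) by omega, pow_add, ← mul_assoc]
        have := hρ j
        gcongr⟩ (pc f₁ x0 (s0 / 2 ^ j) q.1) (pc f₂ y0 (s0 / 2 ^ j) q.2) g (h1.pc _ _ _) (h2.pc _ _ _) hg'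
        (by rw [← hσ j]; exact fun x hx => pc_supp hx) (by rw [← hσ j]; exact fun x hx => pc_supp hx)
    rwa [div_pow r0, ← mul_div_assoc] at this
  · intro j q hq1 hq2 _ hb a' b' ha' hb' z hz1 hz2 a b hab
    have p1 := pos_in hs hq1
    have p2 := pos_in hs hq2
    set ρ := r0 / 2 ^ j with hρd
    have hρ' : r0 / 2 ^ (j + 1) = ρ / 2 := by rw [hρd, pow_succ]; field_simp
    have hσ' : s0 / 2 ^ (j + 1) = e * ρ / 2 := by rw [hσ, hρ']; ring
    have ρ0 : 0 < ρ := hρ j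
    have ρ1 : ρ ≤ r0 := hρ1 j
    have eρ : e * ρ ≤ ρ := by nlinarith
    have ha2 : (a':ℝ) ≤ 1 := by exact_mod_cast (by omega : a' ≤ 1)
    have hb2 : (b':ℝ) ≤ 1 := by exact_mod_cast (by omega : b' ≤ 1)
    have ha0 : (0:ℝ) ≤ a' := by positivity
    have hb0 : (0:ℝ) ≤ b' := by positivity
    have eρ0 : 0 < e * ρ := by positivity
    rw [hρ', hσ'] at hz1 hz2
    rw [hρ']
    rw [hσ j] at p1 p2
    push_cast at hz1 hz2
    have w1 : |z.1 - (x0 + q.1 * (s0 / 2 ^ j))| ≤ ρ := by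
      rw [abs_le] at hz1 ⊢
      rw [hσ j]
      constructor <;> nlinarith
    have w2 : |z.2 - (y0 + q.2 * (s0 / 2 ^ j))| ≤ ρ := by
      rw [abs_le] at hz2 ⊢
      rw [hσ j]
      constructor <;> nlinarith
    have inB : ∀ z : ℝ × ℝ, |z.1 - (x0 + q.1 * (s0 / 2 ^ j))| ≤ ρ → |z.2 - (y0 + q.2 * (s0 / 2 ^ j))| ≤ ρ →
        |z.1 - x0| ≤ 4 * r0 ∧ |z.2 - y0| ≤ 4 * r0 := by
      intro z w1 w2
      rw [hσ j] at w1 w2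
      rw [abs_le] at w1 w2
      constructor <;> rw [abs_le] <;> constructor <;> linarith
    obtain ⟨v1, v2⟩ := inB z w1 w2
    rcases Nat.lt_or_ge (a + b) (n + 1) with hlt | hge
    · obtain ⟨d, hd⟩ : ∃ d, a + b + d = n + 1 := ⟨n + 1 - (a + b), by omega⟩
      have := desc hS (m := n + 1) hK hB ρ0 (fun z w1 w2 => top1 z (inB z w1 w2).1 (inB z w1 w2).2) hb d a b hd z w1 w2
      calc |DD S a b z| * (ρ / 2) ^ (a + b + 3) ≤ (3 ^ d * K * B * ρ ^ d) * (ρ / 2) ^ (a + b + 3) := by gcongr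
        _ = (6 ^ d * K) * (B * ((ρ / 2) ^ d * (ρ / 2) ^ (a + b + 3))) := by
            rw [show (6:ℝ) = 3 * 2 by norm_num, mul_pow 3 2, div_pow ρ 2 d]; field_simp
        _ = (6 ^ d * K) * (B * (ρ / 2) ^ (n + 4)) := by rw [← pow_add]; congr 3; omega
        _ ≤ _ := by gcongr
                    · norm_num
                    · omega
    · rcases Nat.lt_or_ge (a + b) (n + 2) with hlt2 | hge2
      · have hab' : a + b = n + 1 := by omega
        have := top1 z v1 v2 a b hab'
        rw [hab', ← mul_assoc]
        gcongr
        exact this.trans (by gcongr)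
      · have hab' : a + b = n + 2 := by omega
        have := top2 z v1 v2 a b hab'
        calc |DD S a b z| * (ρ / 2) ^ (a + b + 3) = (|DD S a b z| * (ρ / 2)) * (ρ / 2) ^ (n + 4) := by rw [hab']; ring
          _ ≤ (K * B) * (ρ / 2) ^ (n + 4) := by
              have t : |DD S a b z| * (ρ / 2) ≤ |DD S a b z| * (4 * r0) := by gcongr; linarith
              exact mul_le_mul_of_nonneg_right (t.trans this) (by positivity)
          _ = K * (B * (ρ / 2) ^ (n + 4)) := by ring
          _ ≤ _ := by gcongr

theorem alg12 {c s qa qb q p u : ℝ} (hc : 0 ≤ c) (hs : 0 ≤ s) (hp : 0 ≤ p) (hu : 0 ≤ u) (h1 : qa ≤ q) (h2 : qb ≤ q) :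
    ((c * qa + s * qb) * (p * 2)) * u ≤ ((c + s) * 2 * u) * q * p := by
  calc _ ≤ ((c * q + s * q) * (p * 2)) * u := by gcongr
    _ = _ := by ring

set_option maxHeartbeats 1000000 in
theorem AA_step (n : ℕ) (ih : AA n) : AA (n + 1) := by
  intro K hK
  have h6 : (1:ℝ) ≤ 6 ^ (n + 1) := one_le_pow₀ (by norm_num)
  have hKK : K ≤ 6 ^ (n + 1) * K := by nlinarith
  obtain ⟨δ', hδ', hδ1, C', hC', hA⟩ := ih (6 ^ (n + 1) * K) (by linarith)
  have hK0 : 0 < K := by linarith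
  set e := min δ' (1 / K) with he
  have he0 : 0 < e := lt_min hδ' (by positivity)
  have heδ : e ≤ δ' := min_le_left _ _
  have he1 : e ≤ 1 := heδ.trans hδ1
  have heK : e * K ≤ 1 := by
    calc e * K ≤ 1 / K * K := by gcongr; exact min_le_right _ _
      _ = 1 := by field_simp
  set ω : ℝ := (2:ℝ) ^ (1 / (2 * ((n : ℝ) + 3))) with hω
  have ω1 : 1 < ω := Real.one_lt_rpow (by norm_num) (by positivity)
  have ω0 : 0 < ω - 1 := by linarith
  have cast : (((n + 1 : ℕ) : ℝ) + 3) = (n : ℝ) + 4 := by push_cast; ring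
  set θ' : ℝ := 1 / (2 * ((n : ℝ) + 4)) with hθ'
  have θ0' : 0 < θ' := by positivity
  set Q : ℝ := (C' / (ω - 1) + Real.sqrt 2) * 2 * Real.sqrt (4 * (4 / e + 1)) with hQ
  have hQ0 : 0 ≤ Q := by positivity
  refine ⟨e / 4, by positivity, by linarith, C' + 1 + Q, by positivity, ?_⟩
  intro S hS x0 y0 r H hr hH hU hl f₁ f₂ f₃ h1 h2 h3 s1 s2
  rw [cast, ← hθ']
  have N1 := Nm_nonneg f₁
  have N2 := Nm_nonneg f₂
  have N3 := Nm_nonneg f₃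
  have P0 : 0 < H ^ (-θ') := by positivity
  have er : e / 4 * r ≤ r := by nlinarith
  have fin : ∀ c : ℝ, c ≤ C' + 1 + Q → ‖tri S f₁ f₂ f₃‖ ≤ c * Real.sqrt r * H ^ (-θ') * Nm f₁ * Nm f₂ * Nm f₃ →
      ‖tri S f₁ f₂ f₃‖ ≤ (C' + 1 + Q) * Real.sqrt r * H ^ (-θ') * Nm f₁ * Nm f₂ * Nm f₃ := by
    intro c hc h
    refine h.trans ?_
    gcongr
  rcases lt_or_ge H 1 with hH1 | hH1
  · apply fin 1 (by linarith)
    have t := tri_triv hS.cont.measurable h1 h2 h3 (by positivity) s1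
    refine t.trans ?_
    have a1 : 1 ≤ H ^ (-θ') := Real.one_le_rpow_of_pos_of_le_one_of_nonpos hH hH1.le (by linarith)
    gcongr
    calc Real.sqrt (e / 4 * r) ≤ Real.sqrt r := Real.sqrt_le_sqrt er
      _ = 1 * Real.sqrt r * 1 := by ring
      _ ≤ _ := by gcongr
  obtain ⟨ga, gb, hg, hl⟩ := hl
  rcases Nat.lt_or_ge (ga + gb) (n + 1) with hlt | hge
  · apply fin C' (by linarith)
    have t := hA S hS x0 y0 r H hr hH (fun z z1 z2 a b hab => (hU z z1 z2 a b (by omega)).trans (by gcongr))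
      ⟨ga, gb, by omega, hl⟩ f₁ f₂ f₃ h1 h2 h3
      (fun x hx => Set.Ico_subset_Ico_right (by nlinarith) (s1 x hx))
      (fun x hx => Set.Ico_subset_Ico_right (by nlinarith) (s2 x hx))
    refine t.trans ?_
    gcongr
    rw [hθ']
    gcongr
    norm_num
  · have hg' : ga + gb = n + 1 := by omega
    apply fin Q (by linarith)
    have hr4 : r = 4 * (r / 4) := by ring
    have hr0 : 0 < r / 4 := by positivity
    have hsc : H / r ^ (n + 4) * r ^ (n + 4) = H := by field_simp
    have core := step_core n hK he0 he1 heK hC' hS (fun x0 y0 r H hr hH u l f₁ f₂ f₃ n1 n2 n3 s1 s2 =>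
        hA S hS x0 y0 r H hr hH u l f₁ f₂ f₃ n1 n2 n3
        (fun x hx => Set.Ico_subset_Ico_right (by nlinarith) (s1 x hx))
        (fun x hx => Set.Ico_subset_Ico_right (by nlinarith) (s2 x hx))) (x0 := x0) (y0 := y0) (r0 := r / 4) (B := H / r ^ (n + 4))
        hr0 (by positivity) (by
          rw [← hr4, hsc]
          exact fun z z1 z2 a b hab => hU z z1 z2 a b (by omega)) hg' (by
          rw [div_le_iff₀ (by positivity)]; rwa [hg'] at hl) h1 h2 h3
        (by convert s1 using 4; ring_nf) (by convert s2 using 4; ring_nf)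
    have hG : H / r ^ (n + 4) * (r / 4) ^ (n + 4) = H / 4 ^ (n + 4) := by
      rw [div_pow]; field_simp
    rw [hG] at core
    obtain ⟨J, hJ⟩ := summ n C' (r / 4) (e * (r / 4)) (H / 4 ^ (n + 4)) hC' hr0 (by positivity) (by positivity)
    refine (core J).trans ?_
    have hG2 : (H / 4 ^ (n + 4)) ^ (-θ') = H ^ (-θ') * 2 := by
      rw [Real.div_rpow hH.le (by positivity), Real.rpow_neg (x := 4 ^ (n + 4)) (by positivity), div_inv_eq_mul]
      congr 1
      rw [← Real.rpow_natCast, ← Real.rpow_mul (by norm_num), hθ']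
      rw [show ((n + 4 : ℕ) : ℝ) * (1 / (2 * ((n : ℝ) + 4))) = 1 / 2 by push_cast; field_simp]
      rw [← Real.sqrt_eq_rpow, show (4:ℝ) = 2 ^ 2 by norm_num, Real.sqrt_sq (by norm_num)]
    rw [← hω, ← hθ', hG2] at hJ
    have q1 : Real.sqrt (r / 4) ≤ Real.sqrt r := Real.sqrt_le_sqrt (by linarith)
    have q2 : Real.sqrt (e * (r / 4)) ≤ Real.sqrt r := Real.sqrt_le_sqrt (by nlinarith)
    refine mul_le_mul_of_nonneg_right (mul_le_mul_of_nonneg_right (mul_le_mul_of_nonneg_right ?_ N1) N2) N3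
    refine (mul_le_mul_of_nonneg_right hJ (Real.sqrt_nonneg _)).trans ?_
    exact alg12 (by positivity) (Real.sqrt_nonneg _) P0.le (Real.sqrt_nonneg _) q1 q2

theorem AA_all (n : ℕ) : AA n := by
  induction n with
  | zero => exact AA_zero
  | succ n ih => exact AA_step n ih

theorem loc {S : ℝ × ℝ → ℝ} (hS : Sm S) {n i j : ℕ} (hij : i + j = n) (hnz : DD S i j (0, 0) ≠ 0) :
    ∃ ε : ℝ, 0 < ε ∧ ∃ C : ℝ, 0 ≤ C ∧ ∀ lam : ℝ, 1 ≤ |lam| → ∀ f₁ f₂ f₃ : ℝ → ℂ, Nice f₁ → Nice f₂ → Nice f₃ →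
      (∀ x, f₁ x ≠ 0 → x ∈ Set.Ico (-ε) ε) → (∀ x, f₂ x ≠ 0 → x ∈ Set.Ico (-ε) ε) →
      ‖tri (fun p => lam * S p) f₁ f₂ f₃‖ ≤ C * |lam| ^ (-(1 / (2 * ((n : ℝ) + 3)))) * Nm f₁ * Nm f₂ * Nm f₃ := by
  set c := |DD S i j (0, 0)| with hc
  have c0 : 0 < c := abs_pos.2 hnz
  obtain ⟨ε1, hε1, hball⟩ : ∃ ε1 > 0, ∀ p : ℝ × ℝ, dist p (0, 0) < ε1 → c / 2 < |DD S i j p| := by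
    have : ∀ᶠ p in nhds ((0:ℝ), (0:ℝ)), c / 2 < |DD S i j p| :=
      (DD_sm hS i j).cont.abs.continuousAt.eventually_const_lt (by show c / 2 < c; linarith)
    exact Metric.eventually_nhds_iff.1 this
  have bd : ∀ a b : ℕ, ∃ M : ℝ, 0 ≤ M ∧ ∀ z ∈ Metric.closedBall ((0:ℝ), (0:ℝ)) 2, |DD S a b z| ≤ M := by
    intro a b
    obtain ⟨M, hM⟩ := (isCompact_closedBall ((0:ℝ), (0:ℝ)) 2).exists_bound_of_continuousOn (DD_sm hS a b).cont.continuousOn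
    exact ⟨max M 0, le_max_right _ _, fun z hz => (hM z hz).trans (le_max_left _ _)⟩
  choose M M0 hM using bd
  set Bd : ℝ := ∑ a ∈ Finset.range (n + 3), ∑ b ∈ Finset.range (n + 3), M a b with hBd
  have hMB : ∀ a b, a + b ≤ n + 2 → M a b ≤ Bd := by
    intro a b hab
    calc M a b ≤ ∑ b ∈ Finset.range (n + 3), M a b :=
          Finset.single_le_sum (f := fun b => M a b) (fun b _ => M0 a b) (Finset.mem_range.2 (by omega))
      _ ≤ _ := Finset.single_le_sum (f := fun a => ∑ b ∈ Finset.range (n + 3), M a b)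
          (fun a _ => Finset.sum_nonneg (fun b _ => M0 a b)) (Finset.mem_range.2 (by omega))
  obtain ⟨δ, δ0, δ1, C, C0, hA⟩ := AA_all n (max 1 (2 * Bd / c)) (le_max_left _ _)
  set ε := min (δ / 2) (ε1 / 2) with hε
  have ε0 : 0 < ε := lt_min (by positivity) (by positivity)
  have e1 : ε ≤ δ / 2 := min_le_left _ _
  have e2 : ε ≤ ε1 / 2 := min_le_right _ _
  refine ⟨ε, ε0, C * (c / 2) ^ (-(1 / (2 * ((n : ℝ) + 3)))), by positivity, ?_⟩
  intro lam hlam f₁ f₂ f₃ h1 h2 h3 s1 s2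
  have l0 : 0 < |lam| := by linarith
  have key := hA (fun p => lam * S p) (hS.cmul lam) (-ε) (-ε) 1 (|lam| * (c / 2)) one_pos (by positivity) ?_ ?_ f₁ f₂ f₃ h1 h2 h3
    (fun x hx => Set.Ico_subset_Ico_right (by linarith) (s1 x hx))
    (fun x hx => Set.Ico_subset_Ico_right (by linarith) (s2 x hx))
  · rw [Real.mul_rpow l0.le (by positivity), Real.sqrt_one] at key
    refine key.trans (le_of_eq (by ring))
  · intro z z1 z2 a b hab
    rw [DD_cmul hS, one_pow, mul_one, abs_mul]
    have hz : z ∈ Metric.closedBall ((0:ℝ), (0:ℝ)) 2 := by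
      rw [Metric.mem_closedBall, Prod.dist_eq, Real.dist_eq, Real.dist_eq]
      simp only [sub_zero]
      rw [abs_le] at z1 z2
      refine max_le ?_ ?_ <;> rw [abs_le] <;> constructor <;> linarith
    calc |lam| * |DD S a b z| ≤ |lam| * Bd := by gcongr; exact (hM a b z hz).trans (hMB a b hab)
      _ = (2 * Bd / c) * (|lam| * (c / 2)) := by field_simp
      _ ≤ _ := by gcongr; exact le_max_right _ _
  · refine ⟨i, j, hij.le, ?_⟩
    rw [DD_cmul hS, one_pow, mul_one, abs_mul]
    have := hball (-ε, -ε) (by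
      rw [Prod.dist_eq]
      simp only [Real.dist_eq, sub_zero, abs_neg, max_self, abs_of_pos ε0]
      linarith)
    gcongr

/-- Representation of a compactly supported amplitude. -/
theorem amp_repr {a : ℝ × ℝ → ℂ} (ha : ContDiff ℝ (⊤ : ℕ∞) a) (hc : HasCompactSupport a) :
    ∃ b : ℝ × ℝ → ℂ, Continuous b ∧ HasCompactSupport b ∧
      ∀ p, a p = ∫ w : ℝ × ℝ, (Set.Iic p.1 ×ˢ Set.Iic p.2).indicator b w := by
  set a1 : ℝ × ℝ → ℂ := fun p => fderiv ℝ a p (1, 0) with ha1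
  set b : ℝ × ℝ → ℂ := fun p => fderiv ℝ a1 p (0, 1) with hb
  have s1 : ContDiff ℝ (⊤ : ℕ∞) a1 := by
    have := ha.fderiv_right (m := (⊤ : ℕ∞)) (by simp)
    exact this.clm_apply contDiff_const
  have sb : ContDiff ℝ (⊤ : ℕ∞) b := by
    have := s1.fderiv_right (m := (⊤ : ℕ∞)) (by simp)
    exact this.clm_apply contDiff_const
  have c1 : HasCompactSupport a1 := hc.fderiv_apply (𝕜 := ℝ) (1, 0)
  have cb : HasCompactSupport b := c1.fderiv_apply (𝕜 := ℝ) (0, 1)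
  have sl1 : ∀ {g : ℝ × ℝ → ℂ}, HasCompactSupport g → ∀ y, HasCompactSupport (fun t => g (t, y)) := by
    intro g hg y
    refine HasCompactSupport.of_support_subset_isCompact (hg.image continuous_fst) ?_
    intro t ht
    exact ⟨(t, y), subset_tsupport _ ht, rfl⟩
  have sl2 : ∀ {g : ℝ × ℝ → ℂ}, HasCompactSupport g → ∀ x, HasCompactSupport (fun t => g (x, t)) := by
    intro g hg x
    refine HasCompactSupport.of_support_subset_isCompact (hg.image continuous_snd) ?_
    intro t ht
    exact ⟨(x, t), subset_tsupport _ ht, rfl⟩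
  have d1 : ∀ x y, HasDerivAt (fun t => a (t, y)) (a1 (x, y)) x := by
    intro x y
    have h := (ha.differentiable (by simp) (x, y)).hasFDerivAt
    have h' : HasDerivAt (fun t : ℝ => (t, y)) ((1:ℝ), (0:ℝ)) x := (hasDerivAt_id x).prodMk (hasDerivAt_const x y)
    exact h.comp_hasDerivAt x h'
  have d2 : ∀ x y, HasDerivAt (fun t => a1 (x, t)) (b (x, y)) y := by
    intro x y
    have h := (s1.differentiable (by simp) (x, y)).hasFDerivAt
    have h' : HasDerivAt (fun t : ℝ => (x, t)) ((0:ℝ), (1:ℝ)) y := (hasDerivAt_const y x).prodMk (hasDerivAt_id y)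
    exact h.comp_hasDerivAt y h'
  refine ⟨b, sb.continuous, cb, ?_⟩
  rintro ⟨x, y⟩
  have I1 : ∫ u in Set.Iic x, a1 (u, y) = a (x, y) := by
    have := HasCompactSupport.integral_Iic_deriv_eq (f := fun t => a (t, y)) (ha.of_le (by simp) |>.comp (by fun_prop)) (sl1 hc y) x
    rwa [show deriv (fun t => a (t, y)) = fun t => a1 (t, y) from funext fun t => (d1 t y).deriv] at this
  have I2 : ∀ u, ∫ v in Set.Iic y, b (u, v) = a1 (u, y) := by
    intro u
    have := HasCompactSupport.integral_Iic_deriv_eq (f := fun t => a1 (u, t)) (s1.of_le (by simp) |>.comp (by fun_prop)) (sl2 c1 u) y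
    rwa [show deriv (fun t => a1 (u, t)) = fun t => b (u, t) from funext fun t => (d2 u t).deriv] at this
  have ib : Integrable b := sb.continuous.integrable_of_hasCompactSupport cb
  rw [integral_indicator (measurableSet_Iic.prod measurableSet_Iic), Measure.volume_eq_prod, setIntegral_prod]
  · simp only [I2, I1]
  · rw [← Measure.volume_eq_prod]; exact ib.integrableOn

theorem amp_bound {T : ℝ × ℝ → ℝ} (hT : Continuous T) {b a : ℝ × ℝ → ℂ} (hb : Continuous b) (hbc : HasCompactSupport b)
    (hab : ∀ p, a p = ∫ w : ℝ × ℝ, (Set.Iic p.1 ×ˢ Set.Iic p.2).indicator b w)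
    {f₁ f₂ f₃ : ℝ → ℂ} (h1 : Nice f₁) (h2 : Nice f₂) (h3 : Nice f₃) {D : ℝ}
    (hD : ∀ u v : ℝ, ‖tri T ((Set.Ici u).indicator f₁) ((Set.Ici v).indicator f₂) f₃‖ ≤ D) :
    ‖∫ p : ℝ × ℝ, Complex.exp (Complex.I * (T p : ℂ)) * f₁ p.1 * f₂ p.2 * f₃ (p.1 + p.2) * a p‖ ≤ (∫ w, ‖b w‖) * D := by
  set F : ℝ × ℝ → ℂ := fun p => Complex.exp (Complex.I * (T p : ℂ)) * f₁ p.1 * f₂ p.2 * f₃ (p.1 + p.2) with hF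
  have nF : Nice F := tri_integrable hT.measurable h1 h2 h3
  have iF : Integrable F := nF.integrable
  have ib : Integrable b := hb.integrable_of_hasCompactSupport hbc
  have e1 : ∀ p, F p * a p = ∫ w : ℝ × ℝ, F p * (Set.Iic p.1 ×ˢ Set.Iic p.2).indicator b w := by
    intro p; rw [integral_const_mul, hab]
  have ii : Integrable (Function.uncurry fun p w : ℝ × ℝ => F p * (Set.Iic p.1 ×ˢ Set.Iic p.2).indicator b w)
      (volume.prod volume) := by
    have h := iF.mul_prod ib
    have ms : MeasurableSet {q : (ℝ × ℝ) × (ℝ × ℝ) | q.2.1 ≤ q.1.1 ∧ q.2.2 ≤ q.1.2} := by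
      have t1 : MeasurableSet {q : (ℝ × ℝ) × (ℝ × ℝ) | q.2.1 ≤ q.1.1} := measurableSet_le (by fun_prop) (by fun_prop)
      have t2 : MeasurableSet {q : (ℝ × ℝ) × (ℝ × ℝ) | q.2.2 ≤ q.1.2} := measurableSet_le (by fun_prop) (by fun_prop)
      exact t1.inter t2
    refine (h.indicator ms).congr (Filter.Eventually.of_forall ?_)
    rintro ⟨p, w⟩
    simp only [Function.uncurry, Set.indicator, Set.mem_prod, Set.mem_Iic, Set.mem_ofPred_eq]
    split_ifs <;> simp
  have e2 : ∀ w : ℝ × ℝ, ∫ p : ℝ × ℝ, F p * (Set.Iic p.1 ×ˢ Set.Iic p.2).indicator b w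
      = b w * tri T ((Set.Ici w.1).indicator f₁) ((Set.Ici w.2).indicator f₂) f₃ := by
    intro w
    rw [tri, ← integral_const_mul]
    congr 1
    ext p
    simp only [hF, Set.indicator, Set.mem_prod, Set.mem_Iic, Set.mem_Ici]
    by_cases c1 : w.1 ≤ p.1 <;> by_cases c2 : w.2 ≤ p.2 <;> simp [c1, c2]
    ring
  have e3 : ∫ p, F p * a p = ∫ w, b w * tri T ((Set.Ici w.1).indicator f₁) ((Set.Ici w.2).indicator f₂) f₃ := by
    simp_rw [e1, ← e2]
    exact integral_integral_swap ii
  rw [e3, ← integral_mul_const]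
  refine norm_integral_le_of_norm_le (ib.norm.mul_const D) (Filter.Eventually.of_forall fun w => ?_)
  rw [norm_mul]
  exact mul_le_mul_of_nonneg_left (hD _ _) (norm_nonneg _)

def trc (f : ℝ → ℂ) (N : ℕ) : ℝ → ℂ := {x | ‖f x‖ ≤ N ∧ |x| ≤ N}.indicator f

theorem trc_set {f : ℝ → ℂ} (hf : Measurable f) (N : ℕ) : MeasurableSet {x | ‖f x‖ ≤ N ∧ |x| ≤ N} :=
  (measurableSet_le hf.norm measurable_const).inter (measurableSet_le measurable_norm measurable_const)

theorem trc_nice {f : ℝ → ℂ} (hf : Measurable f) (N : ℕ) : Nice (trc f N) := by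
  refine ⟨hf.indicator (trc_set hf N), ⟨N, by positivity, fun x => ?_⟩, ⟨N, by positivity, fun x hx => ?_⟩⟩
  · unfold trc
    by_cases h : x ∈ {x | ‖f x‖ ≤ N ∧ |x| ≤ N}
    · rw [Set.indicator_of_mem h]; exact h.1
    · rw [Set.indicator_of_notMem h]; simp
  · unfold trc
    rw [Set.indicator_of_notMem]
    intro h
    exact absurd h.2 (not_le.2 hx)

theorem trc_norm (f : ℝ → ℂ) (N : ℕ) (x : ℝ) : ‖trc f N x‖ ≤ ‖f x‖ := norm_indicator_le_norm_self _ _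

theorem trc_ev (f : ℝ → ℂ) (x : ℝ) : ∀ᶠ N : ℕ in Filter.atTop, trc f N x = f x := by
  filter_upwards [Filter.eventually_ge_atTop ⌈max ‖f x‖ |x|⌉₊] with N hN
  have := Nat.ceil_le.1 hN
  have hm : x ∈ {x | ‖f x‖ ≤ N ∧ |x| ≤ N} := ⟨(le_max_left _ _).trans this, (le_max_right _ _).trans this⟩
  exact Set.indicator_of_mem hm _

theorem L2_sq (f : Lp ℂ 2 (volume : Measure ℝ)) : ∫ x, ‖f x‖ ^ 2 = ‖f‖ ^ 2 := by
  have h : inner ℂ f f = ∫ x, inner ℂ (f x) (f x) := L2.inner_def f f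
  simp_rw [inner_self_eq_norm_sq_to_K] at h
  have h2 : ((‖f‖ ^ 2 : ℝ) : ℂ) = ((∫ x, ‖f x‖ ^ 2 : ℝ) : ℂ) := by
    rw [← integral_complex_ofReal]
    push_cast
    exact h
  exact (Complex.ofReal_injective h2).symm

theorem trc_Nm (f : Lp ℂ 2 (volume : Measure ℝ)) (N : ℕ) : Nm (trc f N) ≤ ‖f‖ := by
  apply le_of_sqq _ (norm_nonneg _)
  rw [Nm_sq, ← L2_sq]
  refine integral_mono (trc_nice (Lp.stronglyMeasurable f).measurable N).sq_int ?_ (fun x => ?_)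
  · exact (Lp.memLp f).integrable_norm_pow (by norm_num)
  · have := trc_norm f N x
    simp only
    gcongr

theorem E2_ind_le' {f : ℝ → ℂ} (hf : Nice f) {A : Set ℝ} (hA : MeasurableSet A) : Nm (A.indicator f) ≤ Nm f :=
  Real.sqrt_le_sqrt (E2_ind_le hf hA)

theorem to_L2 {T : ℝ × ℝ → ℝ} (hT : Continuous T) {a : ℝ × ℝ → ℂ} (ha : Continuous a) {D : ℝ} (hD0 : 0 ≤ D)
    (hD : ∀ f₁ f₂ f₃ : ℝ → ℂ, Nice f₁ → Nice f₂ → Nice f₃ →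
      ‖∫ p : ℝ × ℝ, Complex.exp (Complex.I * (T p : ℂ)) * f₁ p.1 * f₂ p.2 * f₃ (p.1 + p.2) * a p‖ ≤ D * Nm f₁ * Nm f₂ * Nm f₃)
    (f₁ f₂ f₃ : Lp ℂ 2 (volume : Measure ℝ)) :
    ‖∫ p : ℝ × ℝ, Complex.exp (Complex.I * (T p : ℂ)) * f₁ p.1 * f₂ p.2 * f₃ (p.1 + p.2) * a p‖ ≤ D * ‖f₁‖ * ‖f₂‖ * ‖f₃‖ := by
  have m1 := (Lp.stronglyMeasurable f₁).measurable
  have m2 := (Lp.stronglyMeasurable f₂).measurable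
  have m3 := (Lp.stronglyMeasurable f₃).measurable
  by_cases hi : Integrable (fun p : ℝ × ℝ => Complex.exp (Complex.I * (T p : ℂ)) * f₁ p.1 * f₂ p.2 * f₃ (p.1 + p.2) * a p)
  swap
  · rw [integral_undef hi, norm_zero]; positivity
  have lim := tendsto_integral_of_dominated_convergence
    (F := fun (N : ℕ) (p : ℝ × ℝ) => Complex.exp (Complex.I * (T p : ℂ)) * trc f₁ N p.1 * trc f₂ N p.2 * trc f₃ N (p.1 + p.2) * a p)
    (f := fun p : ℝ × ℝ => Complex.exp (Complex.I * (T p : ℂ)) * f₁ p.1 * f₂ p.2 * f₃ (p.1 + p.2) * a p)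
    _ (fun N => ?_) hi.norm (fun N => Filter.Eventually.of_forall fun p => ?_) (Filter.Eventually.of_forall fun p => ?_)
  · refine le_of_tendsto lim.norm (Filter.Eventually.of_forall fun N => ?_)
    refine (hD _ _ _ (trc_nice m1 N) (trc_nice m2 N) (trc_nice m3 N)).trans ?_
    have := Nm_nonneg (trc f₁ N)
    have := Nm_nonneg (trc f₂ N)
    have := Nm_nonneg (trc f₃ N)
    gcongr
    · exact trc_Nm f₁ N
    · exact trc_Nm f₂ N
    · exact trc_Nm f₃ N
  · exact ((tri_integrable hT.measurable (trc_nice m1 N) (trc_nice m2 N) (trc_nice m3 N)).meas.mul ha.measurable).aestronglyMeasurable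
  · simp only [norm_mul]
    gcongr <;> exact trc_norm _ _ _
  · apply tendsto_nhds_of_eventually_eq
    filter_upwards [trc_ev f₁ p.1, trc_ev f₂ p.2, trc_ev f₃ (p.1 + p.2)] with N h1 h2 h3
    rw [h1, h2, h3]

theorem final
    (S : ℝ × ℝ → ℝ) (hS : ∀ p : ℝ × ℝ, AnalyticAt ℝ S p)
    (n : ℕ)
    (hnonvan : ∃ i j : ℕ, i + j = n ∧ (pdx^[i] (pdy^[j] (DOp S))) (0, 0) ≠ 0) :
    ∃ ε > (0 : ℝ), ∀ a : ℝ × ℝ → ℂ, ContDiff ℝ (⊤ : ℕ∞) a →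
      tsupport a ⊆ {p : ℝ × ℝ | |p.1| < ε ∧ |p.2| < ε} →
      ∃ C : ℝ, ∀ lam : ℝ, 1 ≤ |lam| →
        ∀ f₁ f₂ f₃ : Lp ℂ 2 (volume : Measure ℝ),
          ‖∫ p : ℝ × ℝ, Complex.exp (Complex.I * lam * S p) *
              f₁ p.1 * f₂ p.2 * f₃ (p.1 + p.2) * a p‖ ≤
            C * |lam| ^ (-(1 / (2 * ((n : ℝ) + 3)))) * ‖f₁‖ * ‖f₂‖ * ‖f₃‖ := by
  have hSm : Sm S := by
    have : AnalyticOnNhd ℝ S Set.univ := fun p _ => hS p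
    exact contDiffOn_univ.1 this.contDiffOn_of_completeSpace
  obtain ⟨i, j, hij, hnz⟩ := hnonvan
  obtain ⟨ε, ε0, C, C0, hC⟩ := loc hSm hij hnz
  refine ⟨ε, ε0, fun a ha hsupp => ?_⟩
  have hcs : HasCompactSupport a := by
    refine (isCompact_closedBall ((0:ℝ), (0:ℝ)) ε).of_isClosed_subset (isClosed_tsupport a) (hsupp.trans ?_)
    intro p hp
    rw [Metric.mem_closedBall, Prod.dist_eq, Real.dist_eq, Real.dist_eq]
    simp only [sub_zero]
    exact max_le hp.1.le hp.2.le
  obtain ⟨b, hb, hbc, hab⟩ := amp_repr ha hcs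
  have ib0 : 0 ≤ ∫ w, ‖b w‖ := integral_nonneg fun _ => norm_nonneg _
  refine ⟨(∫ w, ‖b w‖) * C, fun lam hlam f₁ f₂ f₃ => ?_⟩
  have hT : Continuous (fun p => lam * S p) := (hSm.cmul lam).cont
  have P0 : 0 < |lam| ^ (-(1 / (2 * ((n : ℝ) + 3)))) := Real.rpow_pos_of_pos (by linarith) _
  have key := to_L2 hT ha.continuous (D := (∫ w, ‖b w‖) * C * |lam| ^ (-(1 / (2 * ((n : ℝ) + 3))))) (by positivity) ?_ f₁ f₂ f₃
  · convert key using 6 with p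
    push_cast
    ring_nf
  intro f₁ f₂ f₃ h1 h2 h3
  set I := Set.Ico (-ε) ε with hI
  have mI : MeasurableSet I := measurableSet_Ico
  have e1 : ∀ p : ℝ × ℝ, Complex.exp (Complex.I * ((lam * S p : ℝ) : ℂ)) * f₁ p.1 * f₂ p.2 * f₃ (p.1 + p.2) * a p =
      Complex.exp (Complex.I * ((lam * S p : ℝ) : ℂ)) * I.indicator f₁ p.1 * I.indicator f₂ p.2 * f₃ (p.1 + p.2) * a p := by
    intro p
    by_cases hp : a p = 0
    · rw [hp]; ring
    · have := hsupp (subset_tsupport a hp)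
      rw [Set.indicator_of_mem, Set.indicator_of_mem]
      · exact ⟨(abs_lt.1 this.2).1.le, (abs_lt.1 this.2).2⟩
      · exact ⟨(abs_lt.1 this.1).1.le, (abs_lt.1 this.1).2⟩
  simp_rw [e1]
  refine (amp_bound hT hb hbc hab (h1.ind mI) (h2.ind mI) h3
    (D := C * |lam| ^ (-(1 / (2 * ((n : ℝ) + 3)))) * Nm f₁ * Nm f₂ * Nm f₃) (fun u v => ?_)).trans (le_of_eq (by ring))
  have sp : ∀ (f : ℝ → ℂ) (u x : ℝ), (Set.Ici u).indicator (I.indicator f) x ≠ 0 → x ∈ I := by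
    intro f u x hx
    exact Set.mem_of_indicator_ne_zero (Set.mem_of_indicator_ne_zero hx |> fun h => by rwa [Set.indicator_of_mem h] at hx)
  refine (hC lam hlam _ _ _ ((h1.ind mI).ind measurableSet_Ici) ((h2.ind mI).ind measurableSet_Ici) h3 (sp _ _) (sp _ _)).trans ?_
  have := Nm_nonneg f₃
  have := Nm_nonneg f₁
  have := Nm_nonneg ((Set.Ici v).indicator (I.indicator f₂))
  gcongr
  · exact (E2_ind_le' (h1.ind mI) measurableSet_Ici).trans (E2_ind_le' h1 mI)
  · exact (E2_ind_le' (h2.ind mI) measurableSet_Ici).trans (E2_ind_le' h2 mI)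

/-- Sharp upper bound of the main theorem: decay rate
`|λ|^{-1/(2 mult_π₀(S))}` with `mult_π₀(S) = n + 3`, where `n` is the order of
vanishing at the origin of `P = ∂ₓ∂_y(∂ₓ − ∂_y)S`. -/
theorem trilinear_sharp_upper_bound
    (S : ℝ × ℝ → ℝ) (hS : ∀ p : ℝ × ℝ, AnalyticAt ℝ S p)
    (hPnz : ∀ ε > (0 : ℝ), ∃ p : ℝ × ℝ, ‖p‖ < ε ∧ DOp S p ≠ 0)
    (n : ℕ)
    (hvan : ∀ i j : ℕ, i + j < n → (pdx^[i] (pdy^[j] (DOp S))) (0, 0) = 0)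
    (hnonvan : ∃ i j : ℕ, i + j = n ∧ (pdx^[i] (pdy^[j] (DOp S))) (0, 0) ≠ 0) :
    ∃ ε > (0 : ℝ), ∀ a : ℝ × ℝ → ℂ, ContDiff ℝ (⊤ : ℕ∞) a →
      tsupport a ⊆ {p : ℝ × ℝ | |p.1| < ε ∧ |p.2| < ε} →
      ∃ C : ℝ, ∀ lam : ℝ, 1 ≤ |lam| →
        ∀ f₁ f₂ f₃ : Lp ℂ 2 (volume : Measure ℝ),
          ‖∫ p : ℝ × ℝ, Complex.exp (Complex.I * lam * S p) *
              f₁ p.1 * f₂ p.2 * f₃ (p.1 + p.2) * a p‖ ≤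
            C * |lam| ^ (-(1 / (2 * ((n : ℝ) + 3)))) * ‖f₁‖ * ‖f₂‖ * ‖f₃‖ := by
  exact final S hS n hnonvan
end
end

section
/- Let δ₁, δ₂ > 0 and let a : ℝ² → ℂ be a measurable function with |a(x,y)| ≤ 1 for all (x,y), supported in I × J where I and J are intervals with |I| ≤ δ₁ and |J| ≤ δ₂. Then for all f₁, f₂, f₃ ∈ L²(ℝ): |∬_{ℝ²} f₁(x) f₂(y) f₃(x+y) a(x,y) dx dy| ≤ min{δ₁, δ₂}^{1/2} ‖f₁‖_{L²} ‖f₂‖_{L²} ‖f₃‖_{L²}. -/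
open MeasureTheory

noncomputable section

lemma aux_cs (μ : Measure ℝ) (f g : ℝ → ENNReal) (hf : Measurable f) (hg : Measurable g) :
    ∫⁻ x, f x * g x ∂μ ≤
      (∫⁻ x, f x ^ (2:ℝ) ∂μ) ^ ((1:ℝ)/2) * (∫⁻ x, g x ^ (2:ℝ) ∂μ) ^ ((1:ℝ)/2) :=
  ENNReal.lintegral_mul_le_Lp_mul_Lq μ Real.HolderConjugate.two_two hf.aemeasurable hg.aemeasurable

lemma aux_core (F G H : ℝ → ENNReal) (hF : Measurable F) (hG : Measurable G) (hH : Measurable H)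
    (J : Set ℝ) (hJ : MeasurableSet J) :
    ∫⁻ y, ∫⁻ x, J.indicator 1 y * (G y * (F x * H (x + y))) ≤
      volume J ^ ((1:ℝ)/2) * (∫⁻ x, F x ^ (2:ℝ)) ^ ((1:ℝ)/2) * (∫⁻ x, G x ^ (2:ℝ)) ^ ((1:ℝ)/2)
        * (∫⁻ x, H x ^ (2:ℝ)) ^ ((1:ℝ)/2) := by
  have h1 : Measurable (J.indicator (1 : ℝ → ENNReal)) := measurable_one.indicator hJ
  have key : ∀ y, ∫⁻ x, J.indicator 1 y * (G y * (F x * H (x + y))) ≤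
      (J.indicator 1 y * G y) *
       ((∫⁻ x, F x ^ (2:ℝ)) ^ ((1:ℝ)/2) * (∫⁻ x, H x ^ (2:ℝ)) ^ ((1:ℝ)/2)) := by
    intro y
    have hHy : Measurable fun x => H (x + y) := hH.comp (measurable_id.add_const y)
    rw [lintegral_const_mul _ (by fun_prop), lintegral_const_mul _ (by fun_prop),
      ← mul_assoc]
    gcongr
    refine (aux_cs volume F _ hF hHy).trans_eq ?_
    rw [lintegral_add_right_eq_self (fun x => H x ^ (2:ℝ)) y]
  have h2 : ∫⁻ y, (J.indicator (1 : ℝ → ENNReal) y) ^ (2:ℝ) = volume J := by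
    rw [← lintegral_indicator_one hJ]
    congr 1 with y
    by_cases hy : y ∈ J <;> simp [hy]
  calc _ ≤ _ := lintegral_mono key
    _ = _ := lintegral_mul_const _ (h1.mul hG)
    _ ≤ _ := mul_le_mul_left (aux_cs volume _ G h1 hG) _
    _ = _ := by rw [h2]; ring

lemma aux_norm (f : Lp ℂ 2 (volume : Measure ℝ)) :
    (∫⁻ x, ‖f x‖ₑ ^ (2:ℝ)) ^ ((1:ℝ)/2) = ENNReal.ofReal ‖f‖ := by
  rw [Lp.norm_def, ENNReal.ofReal_toReal (Lp.eLpNorm_ne_top f),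
    eLpNorm_eq_lintegral_rpow_enorm_toReal (by norm_num) (by norm_num)]
  simp

/-- Schur-type bound for the trilinear form with the extra factor
`f₃(x+y)` (Lemma `schur` of the paper). -/
theorem trilinear_schur_bound
    (δ₁ δ₂ : ℝ) (hδ₁ : 0 < δ₁) (hδ₂ : 0 < δ₂)
    (a : ℝ × ℝ → ℂ) (ha : Measurable a) (hbd : ∀ p : ℝ × ℝ, ‖a p‖ ≤ 1)
    (I J : Set ℝ) (hI : I.OrdConnected) (hJ : J.OrdConnected)
    (hIv : volume I ≤ ENNReal.ofReal δ₁) (hJv : volume J ≤ ENNReal.ofReal δ₂)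
    (hsupp : Function.support a ⊆ I ×ˢ J)
    (f₁ f₂ f₃ : Lp ℂ 2 (volume : Measure ℝ)) :
    ‖∫ p : ℝ × ℝ, f₁ p.1 * f₂ p.2 * f₃ (p.1 + p.2) * a p‖ ≤
      (min δ₁ δ₂) ^ ((1 : ℝ) / 2) * ‖f₁‖ * ‖f₂‖ * ‖f₃‖ := by
  have m1 : Measurable fun x => ‖f₁ x‖ₑ := (Lp.stronglyMeasurable f₁).measurable.enorm
  have m2 : Measurable fun x => ‖f₂ x‖ₑ := (Lp.stronglyMeasurable f₂).measurable.enorm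
  have m3 : Measurable fun x => ‖f₃ x‖ₑ := (Lp.stronglyMeasurable f₃).measurable.enorm
  have mI : Measurable (I.indicator (1 : ℝ → ENNReal)) :=
    measurable_one.indicator hI.measurableSet
  have mJ : Measurable (J.indicator (1 : ℝ → ENNReal)) :=
    measurable_one.indicator hJ.measurableSet
  have habd : ∀ p, ‖a p‖ₑ ≤ 1 := fun p => by
    rw [← ofReal_norm]; exact ENNReal.ofReal_le_one.2 (hbd p)
  have B2 : ∫⁻ p : ℝ × ℝ, ‖f₁ p.1 * f₂ p.2 * f₃ (p.1 + p.2) * a p‖ₑ ≤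
      ENNReal.ofReal (δ₂ ^ ((1 : ℝ) / 2) * ‖f₁‖ * ‖f₂‖ * ‖f₃‖) := by
    calc _ ≤ ∫⁻ p : ℝ × ℝ, J.indicator 1 p.2 * (‖f₂ p.2‖ₑ * (‖f₁ p.1‖ₑ * ‖f₃ (p.1 + p.2)‖ₑ)) := by
          refine lintegral_mono fun p => ?_
          by_cases hp : a p = 0
          · simp [hp]
          · have := (hsupp hp).2
            simp only [enorm_mul, Set.indicator_of_mem this, Pi.one_apply, one_mul]
            calc _ ≤ ‖f₁ p.1‖ₑ * ‖f₂ p.2‖ₑ * ‖f₃ (p.1 + p.2)‖ₑ * 1 := by gcongr; exact habd p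
              _ = _ := by ring
      _ = _ := lintegral_prod_symm' _ (by fun_prop)
      _ ≤ _ := aux_core _ _ _ m1 m2 m3 J hJ.measurableSet
      _ ≤ ENNReal.ofReal δ₂ ^ ((1:ℝ)/2) * ENNReal.ofReal ‖f₁‖ * ENNReal.ofReal ‖f₂‖
            * ENNReal.ofReal ‖f₃‖ := by
          rw [aux_norm, aux_norm, aux_norm]; gcongr
      _ = _ := by
          rw [ENNReal.ofReal_rpow_of_pos hδ₂, ← ENNReal.ofReal_mul (by positivity),
            ← ENNReal.ofReal_mul (by positivity), ← ENNReal.ofReal_mul (by positivity)]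
  have B1 : ∫⁻ p : ℝ × ℝ, ‖f₁ p.1 * f₂ p.2 * f₃ (p.1 + p.2) * a p‖ₑ ≤
      ENNReal.ofReal (δ₁ ^ ((1 : ℝ) / 2) * ‖f₁‖ * ‖f₂‖ * ‖f₃‖) := by
    calc _ ≤ ∫⁻ p : ℝ × ℝ, I.indicator 1 p.1 * (‖f₁ p.1‖ₑ * (‖f₂ p.2‖ₑ * ‖f₃ (p.2 + p.1)‖ₑ)) := by
          refine lintegral_mono fun p => ?_
          by_cases hp : a p = 0
          · simp [hp]
          · have := (hsupp hp).1
            simp only [enorm_mul, Set.indicator_of_mem this, Pi.one_apply, one_mul]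
            rw [add_comm p.2 p.1]
            calc _ ≤ ‖f₁ p.1‖ₑ * ‖f₂ p.2‖ₑ * ‖f₃ (p.1 + p.2)‖ₑ * 1 := by gcongr; exact habd p
              _ = _ := by ring
      _ = _ := lintegral_prod _ (Measurable.aemeasurable (by fun_prop))
      _ ≤ _ := aux_core _ _ _ m2 m1 m3 I hI.measurableSet
      _ ≤ ENNReal.ofReal δ₁ ^ ((1:ℝ)/2) * ENNReal.ofReal ‖f₂‖ * ENNReal.ofReal ‖f₁‖
            * ENNReal.ofReal ‖f₃‖ := by
          rw [aux_norm, aux_norm, aux_norm]; gcongr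
      _ = _ := by
          rw [ENNReal.ofReal_rpow_of_pos hδ₁, ← ENNReal.ofReal_mul (by positivity),
            ← ENNReal.ofReal_mul (by positivity), ← ENNReal.ofReal_mul (by positivity)]
          congr 1; ring
  have fin : ∀ C : ℝ, 0 ≤ C →
      ∫⁻ p : ℝ × ℝ, ‖f₁ p.1 * f₂ p.2 * f₃ (p.1 + p.2) * a p‖ₑ ≤ ENNReal.ofReal C →
      ‖∫ p : ℝ × ℝ, f₁ p.1 * f₂ p.2 * f₃ (p.1 + p.2) * a p‖ ≤ C := by
    intro C hC h
    have := (enorm_integral_le_lintegral_enorm _).trans h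
    rwa [← ofReal_norm, ENNReal.ofReal_le_ofReal_iff hC] at this
  rcases min_choice δ₁ δ₂ with h | h <;> rw [h]
  · exact fin _ (by positivity) B1
  · exact fin _ (by positivity) B2
end
end
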